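/- arXiv:0908.1885 — 2 statements merged into one kernel-verified Lean document; each statement's English description precedes it below -/
import Mathlib

section
/- Let p ≥ 1 be a real number. Let k̃ : ℝ × [0,∞) → ℝ be a smooth function, 2π-periodic in its first (angular) variable θ, with k̃(θ,τ) > 0 everywhere, satisfying the rescaled curve-shortening equation ∂k̃/∂τ = p·k̃^{1+1/p}·∂²k̃/∂θ² + p·k̃^{2+1/p} − p·k̃ on ℝ × (0,∞), and suppose sup_θ |k̃(θ,τ) − 1| → 0 as τ → ∞. Then for any constant α with 0 < α < 1 there exists a constant C₅ > 0, depending only on p, α and the initial data k̃(·,0), such that for all τ ≥ 0: sup_θ |∂k̃/∂θ (θ,τ)| ≤ C₅·exp(−2αp·τ). -/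
open Real Filter Set

/-!
Since `v = u ^ (-1/p)` satisfies `v_τ = v - (u_θθ + u)`, its Fourier coefficients at `n = ±1` solve
`m' = m`; the convergence `u → 1` keeps them bounded, so they vanish. Hence `v_θ`, which is
`-1/p` times `u ^ (-(1 + 1/p)) u_θ`, has no Fourier mode with `|n| < 2`, and as `u → 1` the function
`u_θ` nearly inherits Wirtinger's inequality with the constant `4`. Inserted in the identity for
`d/dτ ∫ u_θ²` this yields decay at every rate below `2 (3p - 1)`. Once `∫ u_θ²` is small, the
dissipation in `d/dτ ∫ u_θθ²` absorbs the nonlinear terms, and interpolation between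
`∫ u_θ²` and `∫ u_θθθ²` transfers the decay to `∫ u_θθ²`. Since `u_θ` vanishes somewhere, `∫ u_θθ²`
controls `sup |u_θ|²`.
-/

section Fourier

open MeasureTheory

variable {a b : ℝ}

lemma memLp_restrict_Ioc_of_continuousOn {E : Type*} [NormedAddCommGroup E] {f : ℝ → E}
    (hf : ContinuousOn f (Icc a b)) (q : ENNReal) :
    MemLp f q (volume.restrict (Ioc a b)) := by
  obtain ⟨C, hC⟩ := isCompact_Icc.exists_bound_of_continuousOn hf
  exact .of_bound ((hf.mono Ioc_subset_Icc_self).aestronglyMeasurable measurableSet_Ioc) C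
    (ae_restrict_of_forall_mem measurableSet_Ioc fun x hx => hC x (Ioc_subset_Icc_self hx))

lemma intervalIntegrable_fourier_smul {E : Type*} [NormedAddCommGroup E] [NormedSpace ℂ E]
    {f : ℝ → E} (hf : IntervalIntegrable f volume a b) (T : ℝ) (n : ℤ) :
    IntervalIntegrable (fun x : ℝ => fourier n (x : AddCircle T) • f x) volume a b :=
  hf.continuousOn_smul
    ((map_continuous (fourier n)).comp (AddCircle.continuous_mk' T)).continuousOn

lemma fourierCoeffOn_sub {E : Type*} [NormedAddCommGroup E] [NormedSpace ℂ E] {f g : ℝ → E}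
    (hab : a < b) (hf : IntervalIntegrable f volume a b) (hg : IntervalIntegrable g volume a b)
    (n : ℤ) : fourierCoeffOn hab (fun x => f x - g x) n =
      fourierCoeffOn hab f n - fourierCoeffOn hab g n := by
  simp only [fourierCoeffOn_eq_integral, smul_sub]
  rw [intervalIntegral.integral_sub (intervalIntegrable_fourier_smul hf _ _)
    (intervalIntegrable_fourier_smul hg _ _), smul_sub]

lemma norm_fourierCoeffOn_le {E : Type*} [NormedAddCommGroup E] [NormedSpace ℂ E] {f : ℝ → E}
    (hab : a < b) {C : ℝ} (hf : ∀ x ∈ Ioc a b, ‖f x‖ ≤ C) (n : ℤ) :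
    ‖fourierCoeffOn hab f n‖ ≤ C := by
  have hint := intervalIntegral.norm_integral_le_of_norm_le_const
    (f := fun x => fourier (-n) (x : AddCircle (b - a)) • f x) (a := a) (b := b) (C := C)
    fun x hx => by
      rw [norm_smul, fourier_apply, Circle.norm_coe, one_mul]
      exact hf x (uIoc_of_le hab.le ▸ hx)
  have hba : 0 < b - a := sub_pos.2 hab
  rw [fourierCoeffOn_eq_integral, norm_smul, norm_of_nonneg (by positivity), one_div,
    inv_mul_le_iff₀ hba]
  rwa [abs_of_pos hba, mul_comm] at hint

lemma fourierCoeffOn_deriv_of_eq {f f' : ℝ → ℂ} (hab : a < b)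
    (hf : ∀ x ∈ uIcc a b, HasDerivAt f (f' x) x) (hf' : IntervalIntegrable f' volume a b)
    (hfab : f a = f b) (n : ℤ) :
    fourierCoeffOn hab f' n = 2 * π * Complex.I * n / (b - a) * fourierCoeffOn hab f n := by
  have hba : (b : ℂ) - a ≠ 0 := sub_ne_zero.2 (by exact_mod_cast hab.ne')
  rcases eq_or_ne n 0 with rfl | hn
  · simp [fourierCoeffOn_eq_integral, intervalIntegral.integral_eq_sub_of_hasDerivAt hf hf', hfab]
  · have hn' : (n : ℂ) ≠ 0 := by exact_mod_cast hn
    have hπ : (π : ℂ) ≠ 0 := by exact_mod_cast pi_ne_zero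
    rw [fourierCoeffOn_of_hasDerivAt hab hn hf hf', hfab]
    field_simp
    ring

lemma wirtinger_of_fourierCoeffOn_eq {f f' g : ℝ → ℂ} (hab : a < b)
    (hf : ∀ x ∈ uIcc a b, HasDerivAt f (f' x) x) (hf' : MemLp f' 2 (volume.restrict (Ioc a b)))
    (hfab : f a = f b) (hg : MemLp g 2 (volume.restrict (Ioc a b))) (N : ℕ)
    (hN : ∀ n : ℤ, |n| < N → fourierCoeffOn hab f n = fourierCoeffOn hab g n) :
    N ^ 2 * ∫ x in a..b, ‖f x‖ ^ 2 ≤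
      ((b - a) / (2 * π)) ^ 2 * (∫ x in a..b, ‖f' x‖ ^ 2) + N ^ 2 * ∫ x in a..b, ‖g x‖ ^ 2 := by
  have hba : 0 < b - a := sub_pos.2 hab
  have hfL2 : MemLp f 2 (volume.restrict (Ioc a b)) := memLp_restrict_Ioc_of_continuousOn
    (fun x hx => (hf x (uIcc_of_le hab.le ▸ hx)).continuousAt.continuousWithinAt) 2
  have hf'int : IntervalIntegrable f' volume a b :=
    (intervalIntegrable_iff_integrableOn_Ioc_of_le hab.le).2 (hf'.integrable one_le_two)
  have hderiv (n : ℤ) : ((b - a) / (2 * π)) ^ 2 * ‖fourierCoeffOn hab f' n‖ ^ 2 =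
      n ^ 2 * ‖fourierCoeffOn hab f n‖ ^ 2 := by
    rw [fourierCoeffOn_deriv_of_eq hab hf hf'int hfab, norm_mul, mul_pow, ← mul_assoc, ← mul_pow]
    have hnorm : ‖2 * π * Complex.I * n / (b - a : ℂ)‖ = 2 * π * |(n : ℝ)| / (b - a) := by
      rw [← Complex.ofReal_sub]
      simp [abs_of_pos pi_pos, abs_of_pos hba, -Complex.ofReal_sub]
    rw [hnorm, ← sq_abs (n : ℝ)]
    congr 2
    field_simp
  have hterm (n : ℤ) : N ^ 2 * ‖fourierCoeffOn hab f n‖ ^ 2 ≤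
      ((b - a) / (2 * π)) ^ 2 * ‖fourierCoeffOn hab f' n‖ ^ 2 +
        N ^ 2 * ‖fourierCoeffOn hab g n‖ ^ 2 := by
    rw [hderiv]
    rcases lt_or_ge |n| (N : ℤ) with hn | hn
    · rw [← hN n hn]
      exact le_add_of_nonneg_left (by positivity)
    · have hnN : (N : ℝ) ^ 2 ≤ (n : ℝ) ^ 2 := sq_le_sq.2 (by rw [Nat.abs_cast]; exact_mod_cast hn)
      exact le_add_of_le_of_nonneg (by gcongr) (by positivity)
  have hsum := hasSum_le hterm ((hasSum_sq_fourierCoeffOn hab hfL2).mul_left _)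
    (((hasSum_sq_fourierCoeffOn hab hf').mul_left _).add
      ((hasSum_sq_fourierCoeffOn hab hg).mul_left _))
  simp only [smul_eq_mul, mul_left_comm _ (b - a)⁻¹, ← mul_add] at hsum
  exact le_of_mul_le_mul_left hsum (inv_pos.2 hba)

end Fourier

section IntervalIntegral

open MeasureTheory

variable {a b : ℝ}

lemma sq_integral_le_mul_integral_sq {f : ℝ → ℝ} (hab : a ≤ b)
    (hf : IntervalIntegrable f volume a b)
    (hf2 : IntervalIntegrable (fun x => f x ^ 2) volume a b) :
    (∫ x in a..b, f x) ^ 2 ≤ (b - a) * ∫ x in a..b, f x ^ 2 := by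
  rcases hab.eq_or_lt with rfl | hlt
  · simp
  set m := ∫ x in a..b, f x with hm
  have hnonneg : 0 ≤ ∫ x in a..b, ((b - a) * f x - m) ^ 2 :=
    intervalIntegral.integral_nonneg hab fun _ _ => sq_nonneg _
  have hexpand : ∫ x in a..b, ((b - a) * f x - m) ^ 2 =
      (b - a) * ((b - a) * (∫ x in a..b, f x ^ 2) - m ^ 2) := by
    have hpt (x : ℝ) : ((b - a) * f x - m) ^ 2 =
        (b - a) ^ 2 * f x ^ 2 - 2 * (b - a) * m * f x + m ^ 2 := by ring
    simp_rw [hpt]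
    rw [intervalIntegral.integral_add ((hf2.const_mul _).sub (hf.const_mul _)) (by simp),
      intervalIntegral.integral_sub (hf2.const_mul _) (hf.const_mul _),
      intervalIntegral.integral_const_mul, intervalIntegral.integral_const_mul,
      intervalIntegral.integral_const, smul_eq_mul, ← hm]
    ring
  rw [hexpand] at hnonneg
  exact sub_nonneg.1 (nonneg_of_mul_nonneg_right hnonneg (sub_pos.2 hlt))

lemma sq_le_mul_integral_deriv_sq_of_eq_zero {f f' : ℝ → ℝ} {c x : ℝ}
    (hc : c ∈ Icc a b) (hx : x ∈ Icc a b) (hf : ∀ y ∈ Icc a b, HasDerivAt f (f' y) y)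
    (hf' : IntervalIntegrable f' volume a b)
    (hf'2 : IntervalIntegrable (fun y => f' y ^ 2) volume a b) (hfc : f c = 0) :
    f x ^ 2 ≤ (b - a) * ∫ y in a..b, f' y ^ 2 := by
  have hab : a ≤ b := hc.1.trans hc.2
  have hsub : uIcc c x ⊆ Icc a b := ordConnected_Icc.uIcc_subset hc hx
  have hftc : ∫ y in c..x, f' y = f x := by
    rw [intervalIntegral.integral_eq_sub_of_hasDerivAt (fun y hy => hf y (hsub hy))
      (hf'.mono_set (hsub.trans Icc_subset_uIcc)), hfc, sub_zero]
  have habs : |f x| ≤ ∫ y in a..b, |f' y| := by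
    calc |f x| = ‖∫ y in c..x, f' y‖ := by rw [hftc, norm_eq_abs]
      _ ≤ |∫ y in c..x, ‖f' y‖| := intervalIntegral.norm_integral_le_abs_integral_norm
      _ ≤ |∫ y in a..b, ‖f' y‖| := intervalIntegral.abs_integral_mono_interval
          (by
            rw [uIoc_of_le hab]
            exact Ioc_subset_Ioc (le_min hc.1 hx.1) (max_le hc.2 hx.2))
          (Eventually.of_forall fun _ => norm_nonneg _) hf'.norm
      _ = ∫ y in a..b, |f' y| :=
          abs_of_nonneg (intervalIntegral.integral_nonneg hab fun _ _ => abs_nonneg _)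
  calc f x ^ 2 = |f x| ^ 2 := (sq_abs _).symm
    _ ≤ (∫ y in a..b, |f' y|) ^ 2 := by gcongr
    _ ≤ (b - a) * ∫ y in a..b, |f' y| ^ 2 :=
        sq_integral_le_mul_integral_sq hab hf'.abs (by simpa only [sq_abs] using hf'2)
    _ = (b - a) * ∫ y in a..b, f' y ^ 2 := by simp only [sq_abs]

lemma sq_deriv_le_mul_integral_deriv₂_sq {f f' f'' : ℝ → ℝ} {x : ℝ} (hab : a < b)
    (hx : x ∈ Icc a b) (hfab : f a = f b) (hf : ∀ y ∈ Icc a b, HasDerivAt f (f' y) y)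
    (hf' : ∀ y ∈ Icc a b, HasDerivAt f' (f'' y) y) (hf'' : IntervalIntegrable f'' volume a b)
    (hf''2 : IntervalIntegrable (fun y => f'' y ^ 2) volume a b) :
    f' x ^ 2 ≤ (b - a) * ∫ y in a..b, f'' y ^ 2 := by
  obtain ⟨c, hc, hf'c⟩ := exists_hasDerivAt_eq_zero hab
    (fun y hy => (hf y hy).continuousAt.continuousWithinAt) hfab
    fun y hy => hf y (Ioo_subset_Icc_self hy)
  exact sq_le_mul_integral_deriv_sq_of_eq_zero (Ioo_subset_Icc_self hc) hx hf' hf'' hf''2 hf'c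

lemma interpolation_integral_deriv_sq {f f' f'' : ℝ → ℝ} (hab : a ≤ b)
    (hf : ∀ x ∈ uIcc a b, HasDerivAt f (f' x) x) (hf' : ∀ x ∈ uIcc a b, HasDerivAt f' (f'' x) x)
    (hf'' : ContinuousOn f'' (uIcc a b)) (hbd : f b * f' b = f a * f' a) (M : ℝ) :
    2 * M * (∫ x in a..b, f' x ^ 2) ≤
      (∫ x in a..b, f'' x ^ 2) + M ^ 2 * ∫ x in a..b, f x ^ 2 := by
  have hfc : ContinuousOn f (uIcc a b) := fun x hx => (hf x hx).continuousAt.continuousWithinAt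
  have hfc' : ContinuousOn f' (uIcc a b) := fun x hx => (hf' x hx).continuousAt.continuousWithinAt
  have hparts : ∫ x in a..b, f x * f'' x = -∫ x in a..b, f' x ^ 2 := by
    rw [intervalIntegral.integral_mul_deriv_eq_deriv_mul hf hf' hfc'.intervalIntegrable
      hf''.intervalIntegrable, hbd, sub_self, zero_sub]
    simp only [sq]
  have hnonneg : 0 ≤ ∫ x in a..b, (f'' x + M * f x) ^ 2 :=
    intervalIntegral.integral_nonneg hab fun _ _ => sq_nonneg _
  have hpt (x : ℝ) : (f'' x + M * f x) ^ 2 =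
      f'' x ^ 2 + 2 * M * (f x * f'' x) + M ^ 2 * f x ^ 2 := by ring
  simp_rw [hpt] at hnonneg
  rw [intervalIntegral.integral_add, intervalIntegral.integral_add,
    intervalIntegral.integral_const_mul, intervalIntegral.integral_const_mul, hparts] at hnonneg
  · linarith
  all_goals exact ContinuousOn.intervalIntegrable (by fun_prop)

end IntervalIntegral

section DifferentialInequalities

variable {f f' g g' : ℝ → ℝ} {T : ℝ}

lemma le_mul_exp_of_deriv_le {c : ℝ} (hf : ∀ t, T ≤ t → HasDerivAt f (f' t) t)
    (hle : ∀ t, T ≤ t → f' t ≤ -c * f t) {t : ℝ} (ht : T ≤ t) :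
    f t ≤ f T * exp (c * T) * exp (-c * t) := by
  have hd (s : ℝ) (hs : T ≤ s) :
      HasDerivAt (fun s => f s * exp (c * s)) ((f' s + c * f s) * exp (c * s)) s :=
    ((hf s hs).mul ((hasDerivAt_id' s).const_mul c).exp).congr_deriv (by ring)
  have hanti : AntitoneOn (fun s => f s * exp (c * s)) (Ici T) := by
    refine antitoneOn_of_hasDerivWithinAt_nonpos (convex_Ici T)
      (fun s hs => (hd s hs).continuousAt.continuousWithinAt)
      (fun s hs => (hd s (interior_subset hs)).hasDerivWithinAt) fun s hs => ?_
    exact mul_nonpos_of_nonpos_of_nonneg (by linarith [hle s (interior_subset hs)]) (exp_pos _).le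
  calc f t = f t * exp (c * t) * exp (-c * t) := by
        rw [mul_assoc, ← exp_add, neg_mul, add_neg_cancel, exp_zero, mul_one]
    _ ≤ f T * exp (c * T) * exp (-c * t) :=
        mul_le_mul_of_nonneg_right (hanti self_mem_Ici ht ht) (exp_pos _).le

-- The combination `g + A / (a - b) * f` absorbs the forcing term.
lemma le_mul_exp_of_deriv_le_of_forcing {a b A : ℝ} (hba : b < a) (hA : 0 ≤ A)
    (hf : ∀ t, T ≤ t → HasDerivAt f (f' t) t) (hg : ∀ t, T ≤ t → HasDerivAt g (g' t) t)
    (hf0 : ∀ t, T ≤ t → 0 ≤ f t) (hfle : ∀ t, T ≤ t → f' t ≤ -a * f t)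
    (hgle : ∀ t, T ≤ t → g' t ≤ -b * g t + A * f t) {t : ℝ} (ht : T ≤ t) :
    g t ≤ (g T + A / (a - b) * f T) * exp (b * T) * exp (-b * t) := by
  have hab : 0 < a - b := sub_pos.2 hba
  refine (le_add_of_nonneg_right (mul_nonneg (by positivity) (hf0 t ht))).trans
    (le_mul_exp_of_deriv_le (f := fun s => g s + A / (a - b) * f s)
      (fun s hs => (hg s hs).add ((hf s hs).const_mul _)) (fun s hs => ?_) ht)
  calc g' s + A / (a - b) * f' s
      ≤ (-b * g s + A * f s) + A / (a - b) * (-a * f s) := by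
        gcongr
        exacts [hgle s hs, hfle s hs]
    _ = -b * (g s + A / (a - b) * f s) := by field_simp; ring

lemma eq_zero_of_hasDerivAt_self_of_bounded {E : Type*} [NormedAddCommGroup E] [NormedSpace ℝ E]
    {m : ℝ → E} {B : ℝ} (hm : ∀ t, T ≤ t → HasDerivAt m (m t) t)
    (hB : ∀ᶠ t in atTop, ‖m t‖ ≤ B) {t : ℝ} (ht : T ≤ t) : m t = 0 := by
  have hd (s : ℝ) (hs : t ≤ s) : HasDerivAt (fun s => exp (-s) • m s) 0 s :=
    ((hasDerivAt_neg' s).exp.smul (hm s (ht.trans hs))).congr_deriv (by simp)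
  have hconst (s : ℝ) (hs : t ≤ s) : exp (-s) • m s = exp (-t) • m t :=
    constant_of_has_deriv_right_zero
      (fun r hr => (hd r hr.1).continuousAt.continuousWithinAt)
      (fun r hr => (hd r hr.1).hasDerivWithinAt) s (right_mem_Icc.2 hs)
  have hbound : ∀ᶠ s in atTop, ‖exp (-t) • m t‖ ≤ exp (-s) * B := by
    filter_upwards [eventually_ge_atTop t, hB] with s hs hBs
    rw [← hconst s hs, norm_smul, norm_of_nonneg (exp_pos _).le]
    gcongr
  have hlim : Tendsto (fun s => exp (-s) * B) atTop (nhds 0) := by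
    simpa using tendsto_exp_neg_atTop_nhds_zero.mul_const B
  have hzero : exp (-t) • m t = 0 := norm_le_zero_iff.1 (ge_of_tendsto hlim hbound)
  exact (smul_eq_zero.1 hzero).resolve_left (exp_pos _).ne'

lemma exists_pos_forall_le_mul_exp {X : Type*} {f : ℝ → X → ℝ} {β D : ℝ}
    (hbdd : ∀ T, ∃ B, ∀ τ ∈ Icc 0 T, ∀ x, f τ x ≤ B)
    (hdecay : ∀ᶠ τ in atTop, ∀ x, f τ x ≤ D * exp (-β * τ)) :
    ∃ C, 0 < C ∧ ∀ τ, 0 ≤ τ → ∀ x, f τ x ≤ C * exp (-β * τ) := by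
  obtain ⟨T, hT⟩ := eventually_atTop.1 hdecay
  obtain ⟨B, hB⟩ := hbdd T
  refine ⟨max D (max B 1 * exp (|β| * T)), by positivity, fun τ hτ x => ?_⟩
  rcases le_total T τ with hTτ | hτT
  · exact (hT τ hTτ x).trans (by gcongr; exact le_max_left _ _)
  have hexp : 1 ≤ exp (|β| * T) * exp (-β * τ) := by
    rw [← exp_add]
    exact one_le_exp (by nlinarith [le_abs_self β, abs_nonneg β])
  calc f τ x ≤ max B 1 := (hB τ ⟨hτ, hτT⟩ x).trans (le_max_left _ _)
    _ ≤ max B 1 * (exp (|β| * T) * exp (-β * τ)) := le_mul_of_one_le_right (by positivity) hexp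
    _ = max B 1 * exp (|β| * T) * exp (-β * τ) := (mul_assoc _ _ _).symm
    _ ≤ max D (max B 1 * exp (|β| * T)) * exp (-β * τ) := by gcongr; exact le_max_right _ _

end DifferentialInequalities

section PartialDerivatives

open Function Topology

variable {E : Type*} [NormedAddCommGroup E] {w : ℝ → ℝ → E} {θ τ : ℝ}

lemma exists_bound_of_continuousOn_of_periodic {K : Set ℝ} {c : ℝ} (hK : IsCompact K) (hc : 0 < c)
    (hw : ContinuousOn (uncurry w) (univ ×ˢ K))
    (hper : ∀ t ∈ K, Periodic (fun x => w x t) c) :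
    ∃ B, ∀ t ∈ K, ∀ x, ‖w x t‖ ≤ B := by
  obtain ⟨B, hB⟩ := ((isCompact_Icc (a := (0 : ℝ)) (b := c)).prod hK).exists_bound_of_continuousOn
    (hw.mono (prod_mono_left (subset_univ _)))
  refine ⟨B, fun t ht x => ?_⟩
  obtain ⟨y, hy, hxy⟩ := (hper t ht).exists_mem_Ico₀ hc x
  rw [show w x t = w y t from hxy]
  exact hB (y, t) ⟨Ico_subset_Icc_self hy, ht⟩

variable [NormedSpace ℝ E]

/-- The derivative `∂w/∂θ` of a function of an angle `θ` and a time `τ`. -/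
noncomputable def angularDeriv (w : ℝ → ℝ → E) (θ τ : ℝ) : E := deriv (fun x => w x τ) θ

/-- The derivative `∂w/∂τ` of a function of an angle `θ` and a time `τ`. -/
noncomputable def timeDeriv (w : ℝ → ℝ → E) (θ τ : ℝ) : E := deriv (w θ) τ

lemma hasDerivAt_angularDeriv (hw : DifferentiableAt ℝ (uncurry w) (θ, τ)) :
    HasDerivAt (fun x => w x τ) (angularDeriv w θ τ) θ :=
  (hw.comp (f := fun x => (x, τ)) θ (by fun_prop)).hasDerivAt

lemma hasDerivAt_timeDeriv (hw : DifferentiableAt ℝ (uncurry w) (θ, τ)) :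
    HasDerivAt (w θ) (timeDeriv w θ τ) τ :=
  (hw.comp (f := fun t => (θ, t)) τ (by fun_prop)).hasDerivAt

lemma angularDeriv_eq_fderiv (hw : DifferentiableAt ℝ (uncurry w) (θ, τ)) :
    angularDeriv w θ τ = fderiv ℝ (uncurry w) (θ, τ) (1, 0) :=
  (hw.hasFDerivAt.comp_hasDerivAt (f := fun x => (x, τ)) θ
    ((hasDerivAt_id θ).prodMk (hasDerivAt_const θ τ))).deriv

lemma timeDeriv_eq_fderiv (hw : DifferentiableAt ℝ (uncurry w) (θ, τ)) :
    timeDeriv w θ τ = fderiv ℝ (uncurry w) (θ, τ) (0, 1) :=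
  (hw.hasFDerivAt.comp_hasDerivAt (f := fun t => (θ, t)) τ
    ((hasDerivAt_const τ θ).prodMk (hasDerivAt_id τ))).deriv

lemma eventually_differentiableAt {F : ℝ × ℝ → E} {q : ℝ × ℝ} (hF : ContDiffAt ℝ 1 F q) :
    ∀ᶠ r in 𝓝 q, DifferentiableAt ℝ F r :=
  (hF.eventually (by simp)).mono fun _ hr => hr.differentiableAt one_ne_zero

lemma uncurry_angularDeriv_eventuallyEq (hw : ContDiffAt ℝ 1 (uncurry w) (θ, τ)) :
    uncurry (angularDeriv w) =ᶠ[𝓝 (θ, τ)] fun r => fderiv ℝ (uncurry w) r (1, 0) :=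
  (eventually_differentiableAt hw).mono fun _ hr => angularDeriv_eq_fderiv hr

lemma uncurry_timeDeriv_eventuallyEq (hw : ContDiffAt ℝ 1 (uncurry w) (θ, τ)) :
    uncurry (timeDeriv w) =ᶠ[𝓝 (θ, τ)] fun r => fderiv ℝ (uncurry w) r (0, 1) :=
  (eventually_differentiableAt hw).mono fun _ hr => timeDeriv_eq_fderiv hr

lemma contDiffAt_angularDeriv {m n : WithTop ℕ∞} (hw : ContDiffAt ℝ n (uncurry w) (θ, τ))
    (hmn : m + 1 ≤ n) : ContDiffAt ℝ m (uncurry (angularDeriv w)) (θ, τ) :=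
  ((hw.fderiv_right hmn).clm_apply contDiffAt_const).congr_of_eventuallyEq
    (uncurry_angularDeriv_eventuallyEq (hw.of_le (le_add_self.trans hmn)))

lemma contDiffAt_timeDeriv {m n : WithTop ℕ∞} (hw : ContDiffAt ℝ n (uncurry w) (θ, τ))
    (hmn : m + 1 ≤ n) : ContDiffAt ℝ m (uncurry (timeDeriv w)) (θ, τ) :=
  ((hw.fderiv_right hmn).clm_apply contDiffAt_const).congr_of_eventuallyEq
    (uncurry_timeDeriv_eventuallyEq (hw.of_le (le_add_self.trans hmn)))

lemma timeDeriv_angularDeriv_comm (hw : ContDiffAt ℝ 2 (uncurry w) (θ, τ)) :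
    timeDeriv (angularDeriv w) θ τ = angularDeriv (timeDeriv w) θ τ := by
  have hw1 : ContDiffAt ℝ 1 (uncurry w) (θ, τ) := hw.of_le one_le_two
  have hfd : DifferentiableAt ℝ (fderiv ℝ (uncurry w)) (θ, τ) :=
    (hw.fderiv_right one_add_one_eq_two.le).differentiableAt one_ne_zero
  have hsymm : IsSymmSndFDerivAt ℝ (uncurry w) (θ, τ) :=
    hw.isSymmSndFDerivAt (by rw [minSmoothness_of_isRCLikeNormedField])
  rw [timeDeriv_eq_fderiv
      ((contDiffAt_angularDeriv hw one_add_one_eq_two.le).differentiableAt one_ne_zero),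
    angularDeriv_eq_fderiv
      ((contDiffAt_timeDeriv hw one_add_one_eq_two.le).differentiableAt one_ne_zero),
    (uncurry_angularDeriv_eventuallyEq hw1).fderiv_eq,
    (uncurry_timeDeriv_eventuallyEq hw1).fderiv_eq,
    fderiv_clm_apply hfd (differentiableAt_const _),
    fderiv_clm_apply hfd (differentiableAt_const _)]
  simpa using hsymm (0, 1) (1, 0)

lemma periodic_angularDeriv {c : ℝ} (hw : Periodic (fun x => w x τ) c) :
    Periodic (fun x => angularDeriv w x τ) c := fun x => by
  simp only [angularDeriv]
  rw [← deriv_comp_add_const]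
  exact congrArg (deriv · x) (funext hw)

lemma timeDeriv_add_eq_of_periodic {c : ℝ} (hw : ∀ᶠ t in 𝓝 τ, Periodic (fun x => w x t) c) :
    timeDeriv w (θ + c) τ = timeDeriv w θ τ :=
  EventuallyEq.deriv_eq (hw.mono fun _ ht => ht θ)

lemma continuousOn_angularDeriv {J : Set ℝ} (hJ : UniqueDiffOn ℝ J)
    (hw : ContDiffOn ℝ 1 (uncurry w) (univ ×ˢ J)) :
    ContinuousOn (uncurry (angularDeriv w)) (univ ×ˢ J) := by
  have hcont : ContinuousOn (fun q => fderivWithin ℝ (uncurry w) (univ ×ˢ J) q (1, 0))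
      (univ ×ˢ J) :=
    (hw.continuousOn_fderivWithin (uniqueDiffOn_univ.prod hJ) le_rfl).clm_apply continuousOn_const
  refine hcont.congr fun q hq => ?_
  have hfd := (hw.differentiableOn one_ne_zero q hq).hasFDerivWithinAt
  have hslice : HasDerivWithinAt (fun x : ℝ => (x, q.2)) ((1 : ℝ), (0 : ℝ)) univ q.1 :=
    ((hasDerivAt_id q.1).prodMk (hasDerivAt_const q.1 q.2)).hasDerivWithinAt
  exact (hasDerivWithinAt_univ.1
    (hfd.comp_hasDerivWithinAt q.1 hslice fun x _ => mk_mem_prod (mem_univ x) hq.2)).deriv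

end PartialDerivatives

section ParametricIntegral

open Function MeasureTheory Topology

variable {E : Type*} [NormedAddCommGroup E] {F F' : ℝ → ℝ → E} {a b τ : ℝ} {J : Set ℝ}

lemma hasDerivAt_intervalIntegral_of_continuousOn [NormedSpace ℝ E] (hJ : J ∈ 𝓝 τ)
    (hF : ContinuousOn (uncurry F) (uIcc a b ×ˢ J))
    (hF' : ContinuousOn (uncurry F') (uIcc a b ×ˢ J))
    (hd : ∀ θ ∈ uIcc a b, ∀ t ∈ J, HasDerivAt (F θ) (F' θ t) t) :
    HasDerivAt (fun t => ∫ θ in a..b, F θ t) (∫ θ in a..b, F' θ τ) τ := by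
  have slice {G : ℝ → ℝ → E} (hG : ContinuousOn (uncurry G) (uIcc a b ×ˢ J)) {t : ℝ}
      (ht : t ∈ J) : IntervalIntegrable (fun θ => G θ t) volume a b :=
    (hG.comp (f := fun θ => (θ, t)) (by fun_prop) fun θ hθ => ⟨hθ, ht⟩).intervalIntegrable
  obtain ⟨K, hK, hKJ, hKc⟩ := local_compact_nhds hJ
  obtain ⟨B, hB⟩ := (isCompact_uIcc.prod hKc).exists_bound_of_continuousOn
    (hF'.mono (prod_mono_right hKJ))
  refine (intervalIntegral.hasDerivAt_integral_of_dominated_loc_of_deriv_le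
    (F := fun t θ => F θ t) (F' := fun t θ => F' θ t) (bound := fun _ => B) hK ?_ ?_ ?_ ?_
    intervalIntegrable_const ?_).2
  · filter_upwards [hK] with t ht
    exact (slice hF (hKJ ht)).aestronglyMeasurable_restrict_uIoc
  · exact slice hF (mem_of_mem_nhds hJ)
  · exact (slice hF' (mem_of_mem_nhds hJ)).aestronglyMeasurable_restrict_uIoc
  · exact .of_forall fun θ hθ t ht => hB (θ, t) ⟨uIoc_subset_uIcc hθ, ht⟩
  · exact .of_forall fun θ hθ t ht => hd θ (uIoc_subset_uIcc hθ) t (hKJ ht)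

lemma hasDerivAt_fourierCoeffOn [NormedSpace ℂ E] (hab : a < b) (hJ : J ∈ 𝓝 τ)
    (hF : ContinuousOn (uncurry F) (uIcc a b ×ˢ J))
    (hF' : ContinuousOn (uncurry F') (uIcc a b ×ˢ J))
    (hd : ∀ θ ∈ uIcc a b, ∀ t ∈ J, HasDerivAt (F θ) (F' θ t) t) (n : ℤ) :
    HasDerivAt (fun t => fourierCoeffOn hab (fun θ => F θ t) n)
      (fourierCoeffOn hab (fun θ => F' θ τ) n) τ := by
  have hfourier : Continuous fun q : ℝ × ℝ => fourier (-n) (q.1 : AddCircle (b - a)) :=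
    (map_continuous (fourier (-n))).comp
      ((AddCircle.continuous_mk' (b - a)).comp continuous_fst)
  simp only [fourierCoeffOn_eq_integral]
  exact (hasDerivAt_intervalIntegral_of_continuousOn
    (F := fun θ t => fourier (-n) (θ : AddCircle (b - a)) • F θ t)
    (F' := fun θ t => fourier (-n) (θ : AddCircle (b - a)) • F' θ t)
    hJ (hfourier.continuousOn.smul hF) (hfourier.continuousOn.smul hF')
    fun θ hθ t ht => (hd θ hθ t ht).const_smul _).const_smul _

end ParametricIntegral

section NormalizedFlow

open Function Topology

local notation "∂θ" => angularDeriv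
local notation "∂τ" => timeDeriv

section Energy

/-- The squared `L²` norm `∫ w(θ, τ)² dθ` over one period of the angle, as a function of time. -/
noncomputable def energy (w : ℝ → ℝ → ℝ) (τ : ℝ) : ℝ := ∫ θ in (0 : ℝ)..2 * π, w θ τ ^ 2

variable {w : ℝ → ℝ → ℝ} {τ : ℝ}

lemma energy_nonneg (w : ℝ → ℝ → ℝ) (τ : ℝ) : 0 ≤ energy w τ :=
  intervalIntegral.integral_nonneg two_pi_pos.le fun _ _ => sq_nonneg _

lemma continuous_of_contDiffAt_uncurry {n : WithTop ℕ∞}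
    (hw : ∀ x, ContDiffAt ℝ n (uncurry w) (x, τ)) : Continuous fun x => w x τ :=
  continuous_iff_continuousAt.2 fun x =>
    (hw x).continuousAt.comp (f := fun y => (y, τ)) (by fun_prop)

lemma hasDerivAt_energy_angularDeriv {J : Set ℝ} (hJ : J ∈ 𝓝 τ)
    (hw : ∀ θ, ∀ t ∈ J, ContDiffAt ℝ 2 (uncurry w) (θ, t))
    (hper : ∀ t ∈ J, Periodic (fun θ => w θ t) (2 * π)) :
    HasDerivAt (energy (∂θ w)) (-2 * ∫ θ in (0 : ℝ)..2 * π, ∂θ (∂θ w) θ τ * ∂τ w θ τ) τ := by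
  have hτ : τ ∈ J := mem_of_mem_nhds hJ
  have hwθ (θ t : ℝ) (ht : t ∈ J) : ContDiffAt ℝ 1 (uncurry (∂θ w)) (θ, t) :=
    contDiffAt_angularDeriv (hw θ t ht) one_add_one_eq_two.le
  have hwτ (θ t : ℝ) (ht : t ∈ J) : ContDiffAt ℝ 1 (uncurry (∂τ w)) (θ, t) :=
    contDiffAt_timeDeriv (hw θ t ht) one_add_one_eq_two.le
  have hwθθ (θ : ℝ) : ContDiffAt ℝ 0 (uncurry (∂θ (∂θ w))) (θ, τ) :=
    contDiffAt_angularDeriv (hwθ θ τ hτ) (zero_add 1).le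
  have hwθτ (θ t : ℝ) (ht : t ∈ J) : ContDiffAt ℝ 0 (uncurry (∂τ (∂θ w))) (θ, t) :=
    contDiffAt_timeDeriv (hwθ θ t ht) (zero_add 1).le
  have hderiv : HasDerivAt (energy (∂θ w))
      (∫ θ in (0 : ℝ)..2 * π, 2 * (∂θ w θ τ * ∂τ (∂θ w) θ τ)) τ :=
    hasDerivAt_intervalIntegral_of_continuousOn (F := fun θ t => ∂θ w θ t ^ 2)
      (F' := fun θ t => 2 * (∂θ w θ t * ∂τ (∂θ w) θ t)) hJ
      (fun q hq => ((hwθ q.1 q.2 hq.2).continuousAt.pow 2).continuousWithinAt)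
      (fun q hq => (((hwθ q.1 q.2 hq.2).continuousAt.mul
        (hwθτ q.1 q.2 hq.2).continuousAt).const_mul 2).continuousWithinAt)
      fun θ _ t ht => ((hasDerivAt_timeDeriv
        ((hwθ θ t ht).differentiableAt one_ne_zero)).pow 2).congr_deriv (by ring)
  have hperτ : ∂τ w (2 * π) τ = ∂τ w 0 τ := by
    simpa using timeDeriv_add_eq_of_periodic (θ := 0) (eventually_of_mem hJ hper)
  have hperθ : ∂θ w (2 * π) τ = ∂θ w 0 τ := by
    simpa using periodic_angularDeriv (hper τ hτ) 0
  have hparts : ∫ θ in (0 : ℝ)..2 * π, ∂θ w θ τ * ∂τ (∂θ w) θ τ =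
      -∫ θ in (0 : ℝ)..2 * π, ∂θ (∂θ w) θ τ * ∂τ w θ τ := by
    simp only [fun θ => timeDeriv_angularDeriv_comm (hw θ τ hτ)]
    rw [intervalIntegral.integral_mul_deriv_eq_deriv_mul
      (fun θ _ => hasDerivAt_angularDeriv ((hwθ θ τ hτ).differentiableAt one_ne_zero))
      (fun θ _ => hasDerivAt_angularDeriv ((hwτ θ τ hτ).differentiableAt one_ne_zero))
      (continuous_of_contDiffAt_uncurry hwθθ |>.intervalIntegrable _ _)
      (continuous_of_contDiffAt_uncurry (fun θ => contDiffAt_angularDeriv (m := 0) (hwτ θ τ hτ)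
        (zero_add 1).le) |>.intervalIntegrable _ _), hperτ, hperθ, sub_self, zero_sub]
  refine hderiv.congr_deriv ?_
  rw [intervalIntegral.integral_const_mul, hparts]
  ring

end Energy

lemma eventually_abs_rpow_sub_one_le {ι X : Type*} {l : Filter ι} {F : ι → X → ℝ}
    (hF : TendstoUniformly F (fun _ => 1) l) (r : ℝ) {ε : ℝ} (hε : 0 < ε) :
    ∀ᶠ i in l, ∀ x, |F i x ^ r - 1| ≤ ε := by
  obtain ⟨δ, hδ, hrpow⟩ := Metric.continuousAt_iff.1
    (continuousAt_rpow_const 1 r (.inl one_ne_zero)) ε hε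
  filter_upwards [Metric.tendstoUniformly_iff.1 hF δ hδ] with i hi x
  have hx := hrpow (x := F i x) (by rw [dist_comm]; exact hi x)
  rw [one_rpow, Real.dist_eq] at hx
  exact hx.le

lemma neg_two_mul_dissipation_le {p a b x y z : ℝ} (hp : 0 < p) (ha : |a - 1| ≤ 1 / 2)
    (hb : |b - 1| ≤ 1) :
    -2 * (z * (p * a * z + (p + 1) * b * x * y + ((2 * p + 1) * a - p) * x)) ≤
      -(p / 2) * z ^ 2 + 16 * (p + 1) ^ 2 / p * (x ^ 2 * (y ^ 2 + 1)) := by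
  obtain ⟨ha₁, ha₂⟩ := abs_le.1 ha
  obtain ⟨hb₁, hb₂⟩ := abs_le.1 hb
  have hyoung (c w : ℝ) (hc : |c| ≤ 2 * (p + 1)) :
      -2 * (z * (c * w)) ≤ p / 4 * z ^ 2 + 16 * (p + 1) ^ 2 / p * w ^ 2 := by
    have hcw : c ^ 2 * w ^ 2 ≤ (2 * (p + 1)) ^ 2 * w ^ 2 :=
      mul_le_mul_of_nonneg_right (sq_le_sq.2 (hc.trans (le_abs_self _))) (sq_nonneg w)
    have hsq : 0 ≤ (p * z + 4 * (c * w)) ^ 2 / (4 * p) := by positivity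
    calc -2 * (z * (c * w))
        = p / 4 * z ^ 2 + 4 * (c ^ 2 * w ^ 2) / p - (p * z + 4 * (c * w)) ^ 2 / (4 * p) := by
          field_simp
          ring
      _ ≤ p / 4 * z ^ 2 + 4 * ((2 * (p + 1)) ^ 2 * w ^ 2) / p - 0 := by gcongr
      _ = p / 4 * z ^ 2 + 16 * (p + 1) ^ 2 / p * w ^ 2 := by ring
  have hdiffusion : p / 2 * z ^ 2 ≤ p * a * z ^ 2 := by gcongr; nlinarith
  have htransport := hyoung ((p + 1) * b) (x * y) (abs_le.2 ⟨by nlinarith, by nlinarith⟩)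
  have hreaction := hyoung ((2 * p + 1) * a - p) x (abs_le.2 ⟨by nlinarith, by nlinarith⟩)
  linarith

/-- `u` is a `2π`-periodic solution, up to the initial time `0`, of the rescaled curve shortening
equation `u_τ = p u ^ (1 + 1/p) u_θθ + p u ^ (2 + 1/p) - p u` for the normalized curvature. -/
structure IsNormalizedFlow (p : ℝ) (u : ℝ → ℝ → ℝ) : Prop where
  contDiffOn : ContDiffOn ℝ 3 (uncurry u) (univ ×ˢ Ici 0)
  periodic : ∀ τ, 0 ≤ τ → Periodic (fun θ => u θ τ) (2 * π)
  pos : ∀ θ τ, 0 < τ → 0 < u θ τ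
  timeDeriv_eq : ∀ θ τ, 0 < τ →
    ∂τ u θ τ = p * u θ τ ^ (1 + 1 / p) * ∂θ (∂θ u) θ τ + p * u θ τ ^ (2 + 1 / p) - p * u θ τ

namespace IsNormalizedFlow

variable {p : ℝ} {u : ℝ → ℝ → ℝ} {τ : ℝ}

lemma contDiffAt (hu : IsNormalizedFlow p u) (θ : ℝ) (hτ : 0 < τ) :
    ContDiffAt ℝ 3 (uncurry u) (θ, τ) :=
  hu.contDiffOn.contDiffAt (prod_mem_nhds univ_mem (Ici_mem_nhds hτ))

lemma contDiffAt_deriv (hu : IsNormalizedFlow p u) (θ : ℝ) (hτ : 0 < τ) :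
    ContDiffAt ℝ 2 (uncurry (∂θ u)) (θ, τ) :=
  contDiffAt_angularDeriv (hu.contDiffAt θ hτ) two_add_one_eq_three.le

lemma contDiffAt_deriv₂ (hu : IsNormalizedFlow p u) (θ : ℝ) (hτ : 0 < τ) :
    ContDiffAt ℝ 1 (uncurry (∂θ (∂θ u))) (θ, τ) :=
  contDiffAt_angularDeriv (hu.contDiffAt_deriv θ hτ) one_add_one_eq_two.le

lemma contDiffAt_deriv₃ (hu : IsNormalizedFlow p u) (θ : ℝ) (hτ : 0 < τ) :
    ContDiffAt ℝ 0 (uncurry (∂θ (∂θ (∂θ u)))) (θ, τ) :=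
  contDiffAt_angularDeriv (hu.contDiffAt_deriv₂ θ hτ) (zero_add 1).le

lemma hasDerivAt_deriv (hu : IsNormalizedFlow p u) (θ : ℝ) (hτ : 0 < τ) :
    HasDerivAt (fun x => u x τ) (∂θ u θ τ) θ :=
  hasDerivAt_angularDeriv ((hu.contDiffAt θ hτ).differentiableAt (by simp))

lemma hasDerivAt_deriv₂ (hu : IsNormalizedFlow p u) (θ : ℝ) (hτ : 0 < τ) :
    HasDerivAt (fun x => ∂θ u x τ) (∂θ (∂θ u) θ τ) θ :=
  hasDerivAt_angularDeriv ((hu.contDiffAt_deriv θ hτ).differentiableAt two_ne_zero)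

lemma hasDerivAt_deriv₃ (hu : IsNormalizedFlow p u) (θ : ℝ) (hτ : 0 < τ) :
    HasDerivAt (fun x => ∂θ (∂θ u) x τ) (∂θ (∂θ (∂θ u)) θ τ) θ :=
  hasDerivAt_angularDeriv ((hu.contDiffAt_deriv₂ θ hτ).differentiableAt one_ne_zero)

lemma continuous (hu : IsNormalizedFlow p u) (hτ : 0 < τ) : Continuous fun θ => u θ τ :=
  continuous_of_contDiffAt_uncurry fun θ => hu.contDiffAt θ hτ

lemma continuous_deriv (hu : IsNormalizedFlow p u) (hτ : 0 < τ) :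
    Continuous fun θ => ∂θ u θ τ :=
  continuous_of_contDiffAt_uncurry fun θ => hu.contDiffAt_deriv θ hτ

lemma continuous_deriv₂ (hu : IsNormalizedFlow p u) (hτ : 0 < τ) :
    Continuous fun θ => ∂θ (∂θ u) θ τ :=
  continuous_of_contDiffAt_uncurry fun θ => hu.contDiffAt_deriv₂ θ hτ

lemma continuous_deriv₃ (hu : IsNormalizedFlow p u) (hτ : 0 < τ) :
    Continuous fun θ => ∂θ (∂θ (∂θ u)) θ τ :=
  continuous_of_contDiffAt_uncurry fun θ => hu.contDiffAt_deriv₃ θ hτ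

lemma continuous_rpow (hu : IsNormalizedFlow p u) (hτ : 0 < τ) (r : ℝ) :
    Continuous fun θ => u θ τ ^ r :=
  (hu.continuous hτ).rpow_const fun θ => .inl (hu.pos θ τ hτ).ne'

lemma apply_two_pi (hu : IsNormalizedFlow p u) (hτ : 0 < τ) : u (2 * π) τ = u 0 τ := by
  simpa using hu.periodic τ hτ.le 0

lemma deriv_apply_two_pi (hu : IsNormalizedFlow p u) (hτ : 0 < τ) :
    ∂θ u (2 * π) τ = ∂θ u 0 τ := by
  simpa using periodic_angularDeriv (hu.periodic τ hτ.le) 0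

lemma deriv₂_apply_two_pi (hu : IsNormalizedFlow p u) (hτ : 0 < τ) :
    ∂θ (∂θ u) (2 * π) τ = ∂θ (∂θ u) 0 τ := by
  simpa using periodic_angularDeriv (periodic_angularDeriv (hu.periodic τ hτ.le)) 0

lemma timeDeriv_eq_mul (hu : IsNormalizedFlow p u) (θ : ℝ) (hτ : 0 < τ) :
    ∂τ u θ τ = p * u θ τ ^ (1 + 1 / p) * (∂θ (∂θ u) θ τ + u θ τ) - p * u θ τ := by
  rw [hu.timeDeriv_eq θ τ hτ, show 2 + 1 / p = (1 + 1 / p) + 1 by ring,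
    rpow_add_one (hu.pos θ τ hτ).ne']
  ring

lemma timeDeriv_deriv_eq (hu : IsNormalizedFlow p u) (hp : p ≠ 0) (θ : ℝ) (hτ : 0 < τ) :
    ∂τ (∂θ u) θ τ = p * u θ τ ^ (1 + 1 / p) * ∂θ (∂θ (∂θ u)) θ τ +
      (p + 1) * u θ τ ^ (1 / p) * ∂θ u θ τ * ∂θ (∂θ u) θ τ +
      ((2 * p + 1) * u θ τ ^ (1 + 1 / p) - p) * ∂θ u θ τ := by
  have hpos := hu.pos θ τ hτ
  have hderiv : HasDerivAt
      (fun x => p * u x τ ^ (1 + 1 / p) * (∂θ (∂θ u) x τ + u x τ) - p * u x τ)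
      (p * (∂θ u θ τ * (1 + 1 / p) * u θ τ ^ (1 + 1 / p - 1)) * (∂θ (∂θ u) θ τ + u θ τ) +
        p * u θ τ ^ (1 + 1 / p) * (∂θ (∂θ (∂θ u)) θ τ + ∂θ u θ τ) - p * ∂θ u θ τ) θ :=
    ((((hu.hasDerivAt_deriv θ hτ).rpow_const (.inl hpos.ne')).const_mul p).mul
      ((hu.hasDerivAt_deriv₃ θ hτ).add (hu.hasDerivAt_deriv θ hτ))).sub
        ((hu.hasDerivAt_deriv θ hτ).const_mul p)
  rw [timeDeriv_angularDeriv_comm ((hu.contDiffAt θ hτ).of_le (by norm_num)), angularDeriv,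
    funext fun x => hu.timeDeriv_eq_mul x hτ, hderiv.deriv, add_sub_cancel_left,
    add_comm 1 (1 / p), rpow_add_one hpos.ne']
  field_simp
  ring

lemma hasDerivAt_rpow_neg (hu : IsNormalizedFlow p u) (hp : p ≠ 0) (θ : ℝ) (hτ : 0 < τ) :
    HasDerivAt (fun t => u θ t ^ (-(1 / p)))
      (u θ τ ^ (-(1 / p)) - u θ τ - ∂θ (∂θ u) θ τ) τ := by
  have hpos := hu.pos θ τ hτ
  have hinv : u θ τ ^ (-(1 / p) - 1) * u θ τ ^ (1 + 1 / p) = 1 := by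
    rw [← rpow_add hpos, show -(1 / p) - 1 + (1 + 1 / p) = 0 by ring, rpow_zero]
  have hmul : u θ τ ^ (-(1 / p)) = u θ τ ^ (-(1 / p) - 1) * u θ τ := by
    rw [← rpow_add_one hpos.ne', sub_add_cancel]
  refine ((hasDerivAt_timeDeriv ((hu.contDiffAt θ hτ).differentiableAt
    (by simp))).rpow_const (p := -(1 / p)) (.inl hpos.ne')).congr_deriv ?_
  rw [hu.timeDeriv_eq_mul θ hτ, hmul]
  linear_combination (u θ τ ^ (-(1 / p) - 1) * u θ τ - (∂θ (∂θ u) θ τ + u θ τ)) *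
    one_div_mul_cancel hp - 1 / p * p * (∂θ (∂θ u) θ τ + u θ τ) * hinv

lemma fourierCoeffOn_deriv₂ (hu : IsNormalizedFlow p u) (hτ : 0 < τ) (n : ℤ) :
    fourierCoeffOn two_pi_pos (fun θ => ((∂θ (∂θ u) θ τ : ℝ) : ℂ)) n =
      -(n : ℂ) ^ 2 * fourierCoeffOn two_pi_pos (fun θ => (u θ τ : ℂ)) n := by
  have hπ : (π : ℂ) ≠ 0 := by exact_mod_cast pi_ne_zero
  rw [fourierCoeffOn_deriv_of_eq two_pi_pos (fun θ _ => (hu.hasDerivAt_deriv₂ θ hτ).ofReal_comp)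
      ((Complex.continuous_ofReal.comp (hu.continuous_deriv₂ hτ)).intervalIntegrable _ _)
      (by rw [hu.deriv_apply_two_pi hτ]),
    fourierCoeffOn_deriv_of_eq two_pi_pos (fun θ _ => (hu.hasDerivAt_deriv θ hτ).ofReal_comp)
      ((Complex.continuous_ofReal.comp (hu.continuous_deriv hτ)).intervalIntegrable _ _)
      (by rw [hu.apply_two_pi hτ])]
  push_cast
  field_simp
  linear_combination 4 * (π : ℂ) ^ 2 * (n : ℂ) ^ 2 *
    fourierCoeffOn two_pi_pos (fun θ => (u θ τ : ℂ)) n * Complex.I_sq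

lemma hasDerivAt_fourierCoeffOn_rpow (hu : IsNormalizedFlow p u) (hp : p ≠ 0) (hτ : 0 < τ)
    (n : ℤ) :
    HasDerivAt (fun t => fourierCoeffOn two_pi_pos (fun θ => ((u θ t ^ (-(1 / p)) : ℝ) : ℂ)) n)
      (fourierCoeffOn two_pi_pos (fun θ => ((u θ τ ^ (-(1 / p)) : ℝ) : ℂ)) n +
        ((n : ℂ) ^ 2 - 1) * fourierCoeffOn two_pi_pos (fun θ => (u θ τ : ℂ)) n) τ := by
  have hu' (q : ℝ × ℝ) (hq : 0 < q.2) : ContinuousAt (uncurry u) q :=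
    (hu.contDiffAt q.1 hq).continuousAt
  have hrpow (q : ℝ × ℝ) (hq : 0 < q.2) :
      ContinuousAt (fun q : ℝ × ℝ => u q.1 q.2 ^ (-(1 / p))) q :=
    (hu' q hq).rpow_const (.inl (hu.pos q.1 q.2 hq).ne')
  have hint {f : ℝ → ℝ} (hf : Continuous f) :
      IntervalIntegrable (fun θ => (f θ : ℂ)) MeasureTheory.volume 0 (2 * π) :=
    (Complex.continuous_ofReal.comp hf).intervalIntegrable _ _
  have hderiv := hasDerivAt_fourierCoeffOn (F := fun θ t => ((u θ t ^ (-(1 / p)) : ℝ) : ℂ))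
    (F' := fun θ t => ((u θ t ^ (-(1 / p)) - u θ t - ∂θ (∂θ u) θ t : ℝ) : ℂ))
    two_pi_pos (Ioi_mem_nhds hτ)
    (fun q hq => (Complex.continuous_ofReal.continuousAt.comp (hrpow q hq.2)).continuousWithinAt)
    (fun q hq => (Complex.continuous_ofReal.continuousAt.comp (((hrpow q hq.2).sub
      (hu' q hq.2)).sub (hu.contDiffAt_deriv₂ q.1 hq.2).continuousAt)).continuousWithinAt)
    (fun θ _ t ht => (hu.hasDerivAt_rpow_neg hp θ ht).ofReal_comp) n
  refine hderiv.congr_deriv ?_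
  simp only [Complex.ofReal_sub]
  rw [fourierCoeffOn_sub two_pi_pos ((hint (hu.continuous_rpow hτ _)).sub (hint (hu.continuous hτ)))
      (hint (hu.continuous_deriv₂ hτ)),
    fourierCoeffOn_sub two_pi_pos (hint (hu.continuous_rpow hτ _)) (hint (hu.continuous hτ)),
    hu.fourierCoeffOn_deriv₂ hτ]
  ring

lemma fourierCoeffOn_rpow_eq_zero (hu : IsNormalizedFlow p u) (hp : p ≠ 0)
    (hconv : TendstoUniformly (fun τ θ => u θ τ) (fun _ => 1) atTop) (hτ : 0 < τ) {n : ℤ}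
    (hn : |n| = 1) :
    fourierCoeffOn two_pi_pos (fun θ => ((u θ τ ^ (-(1 / p)) : ℝ) : ℂ)) n = 0 := by
  have hn2 : (n : ℂ) ^ 2 = 1 := by exact_mod_cast (sq_abs n).symm.trans (by rw [hn, one_pow])
  refine eq_zero_of_hasDerivAt_self_of_bounded (T := τ) (B := 2)
    (m := fun t => fourierCoeffOn two_pi_pos (fun θ => ((u θ t ^ (-(1 / p)) : ℝ) : ℂ)) n)
    (fun t ht => (hu.hasDerivAt_fourierCoeffOn_rpow hp (hτ.trans_le ht) n).congr_deriv
      (by rw [hn2, sub_self, zero_mul, add_zero])) ?_ le_rfl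
  filter_upwards [eventually_abs_rpow_sub_one_le hconv (-(1 / p)) one_pos] with t ht
  refine norm_fourierCoeffOn_le _ (fun θ _ => ?_) n
  rw [Complex.norm_real, norm_eq_abs, abs_le]
  constructor <;> linarith [abs_le.1 (ht θ)]

lemma fourierCoeffOn_rpow_mul_deriv_eq_zero (hu : IsNormalizedFlow p u) (hp : p ≠ 0)
    (hconv : TendstoUniformly (fun τ θ => u θ τ) (fun _ => 1) atTop) (hτ : 0 < τ) {n : ℤ}
    (hn : |n| < 2) :
    fourierCoeffOn two_pi_pos
      (fun θ => ((u θ τ ^ (-(1 + 1 / p)) * ∂θ u θ τ : ℝ) : ℂ)) n = 0 := by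
  have hderiv (θ : ℝ) : HasDerivAt (fun x => u x τ ^ (-(1 / p)))
      (-(1 / p) * (u θ τ ^ (-(1 + 1 / p)) * ∂θ u θ τ)) θ :=
    ((hu.hasDerivAt_deriv θ hτ).rpow_const (.inl (hu.pos θ τ hτ).ne')).congr_deriv (by
      rw [neg_add_rev, sub_eq_add_neg]
      ring)
  have hmode := fourierCoeffOn_deriv_of_eq two_pi_pos (fun θ _ => (hderiv θ).ofReal_comp)
    ((Complex.continuous_ofReal.comp (continuous_const.mul ((hu.continuous_rpow hτ _).mul
      (hu.continuous_deriv hτ)))).intervalIntegrable _ _) (by rw [hu.apply_two_pi hτ]) n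
  have hzero : (n : ℂ) * fourierCoeffOn two_pi_pos
      (fun θ => ((u θ τ ^ (-(1 / p)) : ℝ) : ℂ)) n = 0 := by
    rcases (abs_nonneg n).eq_or_lt with h0 | hpos
    · simp [abs_eq_zero.1 h0.symm]
    · rw [hu.fourierCoeffOn_rpow_eq_zero hp hconv hτ (by omega), mul_zero]
  rw [mul_div_right_comm, mul_assoc, hzero, mul_zero] at hmode
  simp only [Complex.ofReal_mul (-(1 / p))] at hmode
  rw [fourierCoeffOn.const_mul] at hmode
  exact (mul_eq_zero.1 hmode).resolve_left
    (by exact_mod_cast neg_ne_zero.2 (one_div_ne_zero hp))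

-- The Fourier modes `|n| < 2` of `u_θ` are those of the small function
-- `(1 - u ^ (-(1 + 1/p))) u_θ`.
lemma spectral_gap (hu : IsNormalizedFlow p u) (hp : p ≠ 0)
    (hconv : TendstoUniformly (fun τ θ => u θ τ) (fun _ => 1) atTop) (hτ : 0 < τ) {η : ℝ}
    (hη : ∀ θ, |u θ τ ^ (-(1 + 1 / p)) - 1| ≤ η) :
    4 * (1 - η ^ 2) * energy (∂θ u) τ ≤ energy (∂θ (∂θ u)) τ := by
  set g : ℝ → ℝ := fun θ => ∂θ u θ τ - u θ τ ^ (-(1 + 1 / p)) * ∂θ u θ τ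
  have hprod : Continuous fun θ => u θ τ ^ (-(1 + 1 / p)) * ∂θ u θ τ :=
    (hu.continuous_rpow hτ _).mul (hu.continuous_deriv hτ)
  have hg : Continuous g := (hu.continuous_deriv hτ).sub hprod
  have hofReal {f : ℝ → ℝ} (hf : Continuous f) : Continuous fun θ => (f θ : ℂ) :=
    Complex.continuous_ofReal.comp hf
  have hmodes (n : ℤ) (hn : |n| < (2 : ℕ)) :
      fourierCoeffOn two_pi_pos (fun θ => ((∂θ u θ τ : ℝ) : ℂ)) n =
        fourierCoeffOn two_pi_pos (fun θ => (g θ : ℂ)) n := by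
    simp only [g, Complex.ofReal_sub (∂θ u _ τ)]
    rw [fourierCoeffOn_sub two_pi_pos
        ((hofReal (hu.continuous_deriv hτ)).intervalIntegrable _ _)
        ((hofReal hprod).intervalIntegrable _ _),
      hu.fourierCoeffOn_rpow_mul_deriv_eq_zero hp hconv hτ (by exact_mod_cast hn), sub_zero]
  have hwirtinger := wirtinger_of_fourierCoeffOn_eq two_pi_pos
    (fun θ _ => (hu.hasDerivAt_deriv₂ θ hτ).ofReal_comp)
    (memLp_restrict_Ioc_of_continuousOn (hofReal (hu.continuous_deriv₂ hτ)).continuousOn 2)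
    (by rw [hu.deriv_apply_two_pi hτ])
    (memLp_restrict_Ioc_of_continuousOn (hofReal hg).continuousOn 2) 2 hmodes
  have hsmall : ∫ θ in (0 : ℝ)..2 * π, g θ ^ 2 ≤ η ^ 2 * energy (∂θ u) τ := by
    rw [energy, ← intervalIntegral.integral_const_mul]
    refine intervalIntegral.integral_mono_on two_pi_pos.le
      ((hg.pow 2).intervalIntegrable _ _)
      ((((hu.continuous_deriv hτ).pow 2).const_mul _).intervalIntegrable _ _) fun θ _ => ?_
    calc g θ ^ 2 = (u θ τ ^ (-(1 + 1 / p)) - 1) ^ 2 * ∂θ u θ τ ^ 2 := by simp only [g]; ring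
      _ ≤ η ^ 2 * ∂θ u θ τ ^ 2 :=
        mul_le_mul_of_nonneg_right (sq_le_sq' (abs_le.1 (hη θ)).1 (abs_le.1 (hη θ)).2)
          (sq_nonneg _)
  simp only [Complex.norm_real, norm_eq_abs, sq_abs, sub_zero, div_self two_pi_pos.ne', one_pow,
    one_mul, Nat.cast_ofNat] at hwirtinger
  simp only [energy] at hsmall ⊢
  linarith

lemma integral_reaction_mul_deriv₂ (hu : IsNormalizedFlow p u) (hp : p ≠ 0) (hτ : 0 < τ) :
    ∫ θ in (0 : ℝ)..2 * π, p * (u θ τ ^ (2 + 1 / p) - u θ τ) * ∂θ (∂θ u) θ τ =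
      -∫ θ in (0 : ℝ)..2 * π, ((2 * p + 1) * u θ τ ^ (1 + 1 / p) - p) * ∂θ u θ τ ^ 2 := by
  have hc₁ := hu.continuous_deriv hτ
  have hcq := hu.continuous_rpow hτ (1 + 1 / p)
  have hreaction (θ : ℝ) : HasDerivAt (fun x => p * (u x τ ^ (2 + 1 / p) - u x τ))
      (((2 * p + 1) * u θ τ ^ (1 + 1 / p) - p) * ∂θ u θ τ) θ := by
    refine ((((hu.hasDerivAt_deriv θ hτ).rpow_const (.inl (hu.pos θ τ hτ).ne')).sub
      (hu.hasDerivAt_deriv θ hτ)).const_mul p).congr_deriv ?_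
    rw [show 2 + 1 / p - 1 = 1 + 1 / p by ring]
    field_simp
  rw [intervalIntegral.integral_mul_deriv_eq_deriv_mul
    (fun θ _ => hreaction θ) (fun θ _ => hu.hasDerivAt_deriv₂ θ hτ)
    (Continuous.intervalIntegrable (by fun_prop) _ _)
    ((hu.continuous_deriv₂ hτ).intervalIntegrable _ _),
    hu.apply_two_pi hτ, hu.deriv_apply_two_pi hτ, sub_self, zero_sub]
  simp only [sq, mul_assoc]

lemma hasDerivAt_energy_deriv (hu : IsNormalizedFlow p u) (hp : p ≠ 0) (hτ : 0 < τ) :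
    HasDerivAt (energy (∂θ u))
      (2 * (∫ θ in (0 : ℝ)..2 * π, ((2 * p + 1) * u θ τ ^ (1 + 1 / p) - p) * ∂θ u θ τ ^ 2) -
        2 * p * ∫ θ in (0 : ℝ)..2 * π, u θ τ ^ (1 + 1 / p) * ∂θ (∂θ u) θ τ ^ 2) τ := by
  have hc := hu.continuous hτ
  have hc₂ := hu.continuous_deriv₂ hτ
  have hcq := hu.continuous_rpow hτ (1 + 1 / p)
  have hcq' := hu.continuous_rpow hτ (2 + 1 / p)
  refine (hasDerivAt_energy_angularDeriv (Ioi_mem_nhds hτ)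
    (fun θ t ht => (hu.contDiffAt θ ht).of_le (by norm_num))
    fun t ht => hu.periodic t (le_of_lt ht)).congr_deriv ?_
  have hpt (θ : ℝ) : ∂θ (∂θ u) θ τ * ∂τ u θ τ =
      p * (u θ τ ^ (1 + 1 / p) * ∂θ (∂θ u) θ τ ^ 2) +
        p * (u θ τ ^ (2 + 1 / p) - u θ τ) * ∂θ (∂θ u) θ τ := by
    rw [hu.timeDeriv_eq θ τ hτ]
    ring
  simp_rw [hpt]
  rw [intervalIntegral.integral_add (Continuous.intervalIntegrable (by fun_prop) _ _)
    (Continuous.intervalIntegrable (by fun_prop) _ _), intervalIntegral.integral_const_mul,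
    hu.integral_reaction_mul_deriv₂ hp hτ]
  ring

lemma deriv_energy_deriv_le (hu : IsNormalizedFlow p u) (hp : 0 < p)
    (hconv : TendstoUniformly (fun τ θ => u θ τ) (fun _ => 1) atTop) (hτ : 0 < τ) {η : ℝ}
    (hη₀ : 0 ≤ η) (hη₁ : η ≤ 1) (hq : ∀ θ, |u θ τ ^ (1 + 1 / p) - 1| ≤ η)
    (hq' : ∀ θ, |u θ τ ^ (-(1 + 1 / p)) - 1| ≤ η) :
    deriv (energy (∂θ u)) τ ≤ -(2 * (3 * p - 1 - (10 * p + 1) * η)) * energy (∂θ u) τ := by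
  have hc₁ := hu.continuous_deriv hτ
  have hc₂ := hu.continuous_deriv₂ hτ
  have hcq := hu.continuous_rpow hτ (1 + 1 / p)
  have hreaction : ∫ θ in (0 : ℝ)..2 * π,
      ((2 * p + 1) * u θ τ ^ (1 + 1 / p) - p) * ∂θ u θ τ ^ 2 ≤
        ((2 * p + 1) * (1 + η) - p) * energy (∂θ u) τ := by
    rw [energy, ← intervalIntegral.integral_const_mul]
    refine intervalIntegral.integral_mono_on two_pi_pos.le
      (Continuous.intervalIntegrable (by fun_prop) _ _)
      (Continuous.intervalIntegrable (by fun_prop) _ _) fun θ _ => ?_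
    gcongr
    exact sub_le_iff_le_add'.1 (abs_le.1 (hq θ)).2
  have hdiffusion : (1 - η) * energy (∂θ (∂θ u)) τ ≤
      ∫ θ in (0 : ℝ)..2 * π, u θ τ ^ (1 + 1 / p) * ∂θ (∂θ u) θ τ ^ 2 := by
    rw [energy, ← intervalIntegral.integral_const_mul]
    refine intervalIntegral.integral_mono_on two_pi_pos.le
      (Continuous.intervalIntegrable (by fun_prop) _ _)
      (Continuous.intervalIntegrable (by fun_prop) _ _) fun θ _ => ?_
    gcongr
    linarith [(abs_le.1 (hq θ)).1]
  have hE := energy_nonneg (∂θ u) τ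
  have : 0 ≤ 1 - η := sub_nonneg.2 hη₁
  rw [(hu.hasDerivAt_energy_deriv hp.ne' hτ).deriv]
  calc _ ≤ 2 * (((2 * p + 1) * (1 + η) - p) * energy (∂θ u) τ) -
          2 * p * ((1 - η) * (4 * (1 - η ^ 2) * energy (∂θ u) τ)) := by
        gcongr
        refine le_trans ?_ hdiffusion
        gcongr
        exact hu.spectral_gap hp.ne' hconv hτ hq'
    _ = -(2 * (3 * p - 1 - (10 * p + 1) * η)) * energy (∂θ u) τ -
          8 * p * η * (η ^ 2 + (1 - η)) * energy (∂θ u) τ := by ring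
    _ ≤ -(2 * (3 * p - 1 - (10 * p + 1) * η)) * energy (∂θ u) τ :=
        sub_le_self _ (by positivity)

lemma hasDerivAt_energy_deriv₂ (hu : IsNormalizedFlow p u) (hτ : 0 < τ) :
    HasDerivAt (energy (∂θ (∂θ u)))
      (-2 * ∫ θ in (0 : ℝ)..2 * π, ∂θ (∂θ (∂θ u)) θ τ * ∂τ (∂θ u) θ τ) τ :=
  hasDerivAt_energy_angularDeriv (Ioi_mem_nhds hτ) (fun θ _ ht => hu.contDiffAt_deriv θ ht)
    fun t ht => periodic_angularDeriv (hu.periodic t (le_of_lt ht))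

lemma deriv_sq_le (hu : IsNormalizedFlow p u) (hτ : 0 < τ) (θ : ℝ) :
    ∂θ u θ τ ^ 2 ≤ 2 * π * energy (∂θ (∂θ u)) τ := by
  obtain ⟨x, hx, hθx⟩ := (periodic_angularDeriv (hu.periodic τ hτ.le)).exists_mem_Ico₀ two_pi_pos θ
  rw [hθx]
  simpa only [sub_zero, energy] using sq_deriv_le_mul_integral_deriv₂_sq two_pi_pos
    (Ico_subset_Icc_self hx) (hu.apply_two_pi hτ).symm (fun y _ => hu.hasDerivAt_deriv y hτ)
    (fun y _ => hu.hasDerivAt_deriv₂ y hτ) ((hu.continuous_deriv₂ hτ).intervalIntegrable _ _)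
    (((hu.continuous_deriv₂ hτ).pow 2).intervalIntegrable _ _)

lemma deriv₂_sq_le (hu : IsNormalizedFlow p u) (hτ : 0 < τ) (θ : ℝ) :
    ∂θ (∂θ u) θ τ ^ 2 ≤ 2 * π * energy (∂θ (∂θ (∂θ u))) τ := by
  obtain ⟨x, hx, hθx⟩ := (periodic_angularDeriv
    (periodic_angularDeriv (hu.periodic τ hτ.le))).exists_mem_Ico₀ two_pi_pos θ
  rw [hθx]
  simpa only [sub_zero, energy] using sq_deriv_le_mul_integral_deriv₂_sq two_pi_pos
    (Ico_subset_Icc_self hx) (hu.deriv_apply_two_pi hτ).symm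
    (fun y _ => hu.hasDerivAt_deriv₂ y hτ) (fun y _ => hu.hasDerivAt_deriv₃ y hτ)
    ((hu.continuous_deriv₃ hτ).intervalIntegrable _ _)
    (((hu.continuous_deriv₃ hτ).pow 2).intervalIntegrable _ _)

lemma deriv_energy_deriv₂_le_dissipation (hu : IsNormalizedFlow p u) (hp : 0 < p) (hτ : 0 < τ)
    (hq : ∀ θ, |u θ τ ^ (1 + 1 / p) - 1| ≤ 1 / 2) (hr : ∀ θ, |u θ τ ^ (1 / p) - 1| ≤ 1) :
    deriv (energy (∂θ (∂θ u))) τ ≤ -(p / 2) * energy (∂θ (∂θ (∂θ u))) τ +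
      16 * (p + 1) ^ 2 / p * (2 * π * energy (∂θ (∂θ (∂θ u))) τ + 1) * energy (∂θ u) τ := by
  have hc₁ := hu.continuous_deriv hτ
  have hc₃ := hu.continuous_deriv₃ hτ
  have hcτ : Continuous fun θ => ∂τ (∂θ u) θ τ :=
    continuous_of_contDiffAt_uncurry fun θ =>
      contDiffAt_timeDeriv (m := 0) (hu.contDiffAt_deriv θ hτ) (by norm_num)
  set M := 16 * (p + 1) ^ 2 / p * (2 * π * energy (∂θ (∂θ (∂θ u))) τ + 1)
  calc deriv (energy (∂θ (∂θ u))) τ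
      ≤ ∫ θ in (0 : ℝ)..2 * π, (-(p / 2) * ∂θ (∂θ (∂θ u)) θ τ ^ 2 + M * ∂θ u θ τ ^ 2) := by
        rw [(hu.hasDerivAt_energy_deriv₂ hτ).deriv, ← intervalIntegral.integral_const_mul]
        refine intervalIntegral.integral_mono_on two_pi_pos.le
          (Continuous.intervalIntegrable (by fun_prop) _ _)
          (Continuous.intervalIntegrable (by fun_prop) _ _) fun θ _ => ?_
        rw [hu.timeDeriv_deriv_eq hp.ne' θ hτ]
        refine (neg_two_mul_dissipation_le hp (hq θ) (hr θ)).trans ?_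
        rw [mul_comm (∂θ u θ τ ^ 2), ← mul_assoc]
        refine add_le_add_right (mul_le_mul_of_nonneg_right ?_ (sq_nonneg _)) _
        simp only [M]
        gcongr
        exact hu.deriv₂_sq_le hτ θ
    _ = -(p / 2) * energy (∂θ (∂θ (∂θ u))) τ + M * energy (∂θ u) τ := by
        rw [intervalIntegral.integral_add (Continuous.intervalIntegrable (by fun_prop) _ _)
          (Continuous.intervalIntegrable (by fun_prop) _ _), intervalIntegral.integral_const_mul,
          intervalIntegral.integral_const_mul, ← energy, ← energy]

lemma deriv_energy_deriv₂_le (hu : IsNormalizedFlow p u) (hp : 0 < p) (hτ : 0 < τ)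
    (hq : ∀ θ, |u θ τ ^ (1 + 1 / p) - 1| ≤ 1 / 2) (hr : ∀ θ, |u θ τ ^ (1 / p) - 1| ≤ 1)
    (hE : 16 * (p + 1) ^ 2 / p * (2 * π * energy (∂θ u) τ) ≤ p / 4) (β : ℝ) :
    deriv (energy (∂θ (∂θ u))) τ ≤ -(2 * β) * energy (∂θ (∂θ u)) τ +
      (16 * (p + 1) ^ 2 / p + 4 * β ^ 2 / p) * energy (∂θ u) τ := by
  have hdissipation := hu.deriv_energy_deriv₂_le_dissipation hp hτ hq hr
  have hinterp := interpolation_integral_deriv_sq two_pi_pos.le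
    (fun θ _ => hu.hasDerivAt_deriv₂ θ hτ) (fun θ _ => hu.hasDerivAt_deriv₃ θ hτ)
    (hu.continuous_deriv₃ hτ).continuousOn
    (by rw [hu.deriv_apply_two_pi hτ, hu.deriv₂_apply_two_pi hτ]) (4 * β / p)
  set A := 16 * (p + 1) ^ 2 / p
  have habsorb := mul_le_mul_of_nonneg_right hE (energy_nonneg (∂θ (∂θ (∂θ u))) τ)
  calc deriv (energy (∂θ (∂θ u))) τ
      ≤ -(p / 4) * energy (∂θ (∂θ (∂θ u))) τ + A * energy (∂θ u) τ := by linarith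
    _ ≤ -(p / 4) * (2 * (4 * β / p) * energy (∂θ (∂θ u)) τ -
          (4 * β / p) ^ 2 * energy (∂θ u) τ) + A * energy (∂θ u) τ := by
        simp only [neg_mul]
        gcongr
        exact sub_le_iff_le_add.2 hinterp
    _ = -(2 * β) * energy (∂θ (∂θ u)) τ + (A + 4 * β ^ 2 / p) * energy (∂θ u) τ := by
        field_simp
        ring

lemma eventually_deriv_energy_deriv_le (hu : IsNormalizedFlow p u) (hp : 0 < p)
    (hconv : TendstoUniformly (fun τ θ => u θ τ) (fun _ => 1) atTop) {γ : ℝ}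
    (hγ : γ < 3 * p - 1) :
    ∀ᶠ τ in atTop, deriv (energy (∂θ u)) τ ≤ -(2 * γ) * energy (∂θ u) τ := by
  set η := min 1 ((3 * p - 1 - γ) / (10 * p + 1))
  have hη : 0 < η := lt_min one_pos (div_pos (sub_pos.2 hγ) (by positivity))
  have hηγ : (10 * p + 1) * η ≤ 3 * p - 1 - γ :=
    (le_div_iff₀' (by positivity)).1 (min_le_right _ _)
  filter_upwards [eventually_gt_atTop 0, eventually_abs_rpow_sub_one_le hconv (1 + 1 / p) hη,
    eventually_abs_rpow_sub_one_le hconv (-(1 + 1 / p)) hη] with τ hτ hq hq'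
  refine (hu.deriv_energy_deriv_le hp hconv hτ hη.le (min_le_left _ _) hq hq').trans
    (mul_le_mul_of_nonneg_right ?_ (energy_nonneg _ _))
  linarith

lemma tendsto_energy_deriv (hu : IsNormalizedFlow p u) (hp : 1 / 3 < p)
    (hconv : TendstoUniformly (fun τ θ => u θ τ) (fun _ => 1) atTop) :
    Tendsto (energy (∂θ u)) atTop (𝓝 0) := by
  obtain ⟨T, hT⟩ := eventually_atTop.1 ((eventually_gt_atTop 0).and
    (hu.eventually_deriv_energy_deriv_le (γ := (3 * p - 1) / 2) (by linarith) hconv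
      (by linarith)))
  have hdecay (t : ℝ) (ht : T ≤ t) := le_mul_exp_of_deriv_le
    (fun t ht => (hu.hasDerivAt_energy_deriv (by linarith)
      (hT t ht).1).differentiableAt.hasDerivAt) (fun t ht => (hT t ht).2) ht
  refine squeeze_zero' (Eventually.of_forall (energy_nonneg _))
    (eventually_atTop.2 ⟨T, hdecay⟩) ?_
  have hexp : Tendsto (fun t => exp (-(2 * ((3 * p - 1) / 2)) * t)) atTop (𝓝 0) :=
    tendsto_exp_atBot.comp (tendsto_id.const_mul_atTop_of_neg (by linarith))
  simpa only [mul_zero] using hexp.const_mul _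

lemma eventually_deriv_energy_deriv₂_le (hu : IsNormalizedFlow p u) (hp : 1 / 3 < p)
    (hconv : TendstoUniformly (fun τ θ => u θ τ) (fun _ => 1) atTop) (β : ℝ) :
    ∀ᶠ τ in atTop, deriv (energy (∂θ (∂θ u))) τ ≤ -(2 * β) * energy (∂θ (∂θ u)) τ +
      (16 * (p + 1) ^ 2 / p + 4 * β ^ 2 / p) * energy (∂θ u) τ := by
  have hp₀ : 0 < p := by linarith
  have hsmall : Tendsto (fun τ => 16 * (p + 1) ^ 2 / p * (2 * π * energy (∂θ u) τ)) atTop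
      (𝓝 0) := by
    simpa only [mul_zero] using ((hu.tendsto_energy_deriv hp hconv).const_mul _).const_mul _
  filter_upwards [eventually_gt_atTop 0,
    eventually_abs_rpow_sub_one_le hconv (1 + 1 / p) one_half_pos,
    eventually_abs_rpow_sub_one_le hconv (1 / p) one_pos,
    hsmall.eventually_le_const (show 0 < p / 4 by positivity)] with τ hτ hq hr hE
  exact hu.deriv_energy_deriv₂_le hp₀ hτ hq hr hE β

lemma exists_energy_deriv₂_le_mul_exp (hu : IsNormalizedFlow p u) (hp : 1 / 3 < p)
    (hconv : TendstoUniformly (fun τ θ => u θ τ) (fun _ => 1) atTop) {β : ℝ}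
    (hβ : β < 3 * p - 1) :
    ∃ D, ∀ᶠ τ in atTop, energy (∂θ (∂θ u)) τ ≤ D * exp (-(2 * β) * τ) := by
  have hp₀ : 0 < p := by linarith
  obtain ⟨γ, hβγ, hγ⟩ := exists_between hβ
  obtain ⟨T, hT⟩ := eventually_atTop.1 ((eventually_gt_atTop 0).and
    ((hu.eventually_deriv_energy_deriv_le hp₀ hconv hγ).and
      (hu.eventually_deriv_energy_deriv₂_le hp hconv β)))
  exact ⟨_, eventually_atTop.2 ⟨T, fun τ hτ => le_mul_exp_of_deriv_le_of_forcing
    (show 2 * β < 2 * γ by linarith) (by positivity)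
    (fun t ht => (hu.hasDerivAt_energy_deriv hp₀.ne' (hT t ht).1).differentiableAt.hasDerivAt)
    (fun t ht => (hu.hasDerivAt_energy_deriv₂ (hT t ht).1).differentiableAt.hasDerivAt)
    (fun t _ => energy_nonneg _ t) (fun t ht => (hT t ht).2.1) (fun t ht => (hT t ht).2.2) hτ⟩⟩

lemma exists_abs_deriv_le (hu : IsNormalizedFlow p u) (T : ℝ) :
    ∃ B, ∀ τ ∈ Icc 0 T, ∀ θ, |∂θ u θ τ| ≤ B :=
  exists_bound_of_continuousOn_of_periodic isCompact_Icc two_pi_pos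
    ((continuousOn_angularDeriv (uniqueDiffOn_Ici 0)
      (hu.contDiffOn.of_le (by norm_num))).mono (prod_mono_right Icc_subset_Ici_self))
    fun τ hτ => periodic_angularDeriv (hu.periodic τ hτ.1)

end IsNormalizedFlow

theorem first_derivative_sup_decay_general {p β : ℝ} {u : ℝ → ℝ → ℝ} (hp : 1 / 3 < p)
    (hu : IsNormalizedFlow p u)
    (hconv : TendstoUniformly (fun τ θ => u θ τ) (fun _ => 1) atTop) (hβ : β < 3 * p - 1) :
    ∃ C, 0 < C ∧ ∀ τ, 0 ≤ τ → ∀ θ, |∂θ u θ τ| ≤ C * exp (-β * τ) := by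
  obtain ⟨D, hD⟩ := hu.exists_energy_deriv₂_le_mul_exp hp hconv hβ
  refine exists_pos_forall_le_mul_exp (D := √(2 * π * D)) hu.exists_abs_deriv_le ?_
  filter_upwards [hD, eventually_gt_atTop 0] with τ hDτ hτ θ
  have hD₀ : 0 ≤ D := nonneg_of_mul_nonneg_left ((energy_nonneg _ _).trans hDτ) (exp_pos _)
  refine abs_le_of_sq_le_sq ?_ (by positivity)
  calc ∂θ u θ τ ^ 2 ≤ 2 * π * energy (∂θ (∂θ u)) τ := hu.deriv_sq_le hτ θ
    _ ≤ 2 * π * (D * exp (-(2 * β) * τ)) := by gcongr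
    _ = (√(2 * π * D) * exp (-β * τ)) ^ 2 := by
      rw [mul_pow, sq_sqrt (by positivity), ← exp_nat_mul]
      ring_nf

end NormalizedFlow

/-- Corollary 3.7: exponential decay of the uniform norm of the first
angular derivative of the normalized curvature. -/
theorem first_derivative_sup_decay
    (p : ℝ) (hp : 1 ≤ p) (K : ℝ → ℝ → ℝ)
    (hsmooth : ContDiffOn ℝ (⊤ : ℕ∞) (fun q : ℝ × ℝ => K q.1 q.2) (univ ×ˢ Ici 0))
    (hper : ∀ τ : ℝ, Function.Periodic (fun θ => K θ τ) (2 * π))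
    (hpos : ∀ θ τ : ℝ, 0 ≤ τ → 0 < K θ τ)
    (hpde : ∀ θ : ℝ, ∀ τ ∈ Ioi (0:ℝ),
      deriv (fun s => K θ s) τ =
        p * K θ τ ^ (1 + 1 / p) * deriv (deriv (fun x => K x τ)) θ
          + p * K θ τ ^ (2 + 1 / p) - p * K θ τ)
    (hconv : TendstoUniformly (fun τ θ => K θ τ) (fun _ => 1) atTop) :
    ∀ α : ℝ, 0 < α → α < 1 → ∃ C : ℝ, 0 < C ∧ ∀ τ : ℝ, 0 ≤ τ → ∀ θ : ℝ,
      |deriv (fun x => K x τ) θ| ≤ C * Real.exp (-2 * α * p * τ) := by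
  intro α _ hα
  have hK : IsNormalizedFlow p K :=
    ⟨contDiffOn_infty.1 hsmooth 3, fun τ _ => hper τ, fun θ τ hτ => hpos θ τ hτ.le, hpde⟩
  rw [show -2 * α * p = -(2 * α * p) by ring]
  exact first_derivative_sup_decay_general (by linarith) hK hconv (by nlinarith)
end

section
/- Let p ≥ 1 be a real number, 0 < α < 1, and let L ≥ 1 be an integer. Let k̃ : ℝ × [0,∞) → ℝ be a smooth function, 2π-periodic in its first (angular) variable θ, with k̃(θ,τ) > 0 everywhere, satisfying the rescaled curve-shortening equation ∂k̃/∂τ = p·k̃^{1+1/p}·∂²k̃/∂θ² + p·k̃^{2+1/p} − p·k̃ on ℝ × (0,∞), and suppose sup_θ |k̃(θ,τ) − 1| → 0 as τ → ∞. Assume there is a constant C(L,p) > 0 such that for every l with 1 ≤ l ≤ L and all τ > 0: sup_θ |∂^l k̃/∂θ^l (θ,τ)| ≤ C(L,p)·exp(−2αp·τ), and also (∫₀^{2π} (∂^{L+1} k̃/∂θ^{L+1})² dθ)^{1/2} ≤ C(L,p)·exp(−2αp·τ) for all τ > 0. Then there exists a constant C(L+1,p) > 0 such that for all τ > 0: (∫₀^{2π}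 (∂^{L+2} k̃/∂θ^{L+2})² dθ)^{1/2} ≤ C(L+1,p)·exp(−2αp·τ), and consequently sup_θ |∂^{L+1} k̃/∂θ^{L+1} (θ,τ)| ≤ C(L+1,p)·exp(−2αp·τ) for all τ > 0. -/
open Real Filter Set
open scoped ContDiff Topology

/-!
This is an energy estimate for `E(τ) = ∫ (∂^{L+2} K)²`. Differentiating in time, inserting the
equation `∂_τ K = Φ(K) ∂²K + g(K)` and integrating by parts once leaves
`dE/dτ = -2 ∫ ∂^{L+3} K · ∂^{L+1} (Φ(K) ∂²K + g(K))`. The solution stays in a compact subset of the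
domain of `Φ` and `g`, so the top order term dissipates at least `2φ ∫ (∂^{L+3} K)²` with
`φ = min Φ > 0`, half of which absorbs the product with the lower order terms. By Leibniz,
Faà di Bruno and Sobolev the square of the latter integrates to at most `C (ε² + E)`, where `ε`
is the assumed bound at time `τ`. Finally `E` is interpolated between the orders `L + 1` and
`L + 3`, so the remaining dissipation turns into `dE/dτ ≤ -λ E + C ε²` for any prescribed `λ`.
Choosing `λ` larger than twice the decay exponent, Grönwall's inequality gives `E ≤ C ε²`, and the sup bound
follows since `∂^{L+1} K` vanishes somewhere in each period.
-/

section Composition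

variable {E F : Type*} [NormedAddCommGroup E] [NormedSpace ℝ E] [NormedAddCommGroup F]
  [NormedSpace ℝ F] {h : E → F} {U S : Set E} {N : ℕ}

lemma exists_norm_iteratedDeriv_comp_le_pow (hU : IsOpen U) (hh : ContDiffOn ℝ N h U)
    (hS : IsCompact S) (hSU : S ⊆ U) :
    ∃ C, 0 ≤ C ∧ ∀ u : ℝ → E, ContDiff ℝ N u → (∀ x, u x ∈ S) →
      ∀ n ≤ N, ∀ x D, (∀ i, 1 ≤ i → i ≤ n → ‖iteratedDeriv i u x‖ ≤ D ^ i) →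
        ‖iteratedDeriv n (h ∘ u) x‖ ≤ C * D ^ n := by
  have hcont : ContinuousOn
      (fun y => ∑ i ∈ Finset.range (N + 1), ‖iteratedFDerivWithin ℝ i h U y‖) S :=
    continuousOn_finsetSum _ fun i hi =>
      ((hh.continuousOn_iteratedFDerivWithin
        (by exact_mod_cast Finset.mem_range_succ_iff.1 hi) hU.uniqueDiffOn).mono hSU).norm
  obtain ⟨B, hB⟩ := hS.exists_bound_of_continuousOn hcont
  refine ⟨N.factorial * |B|, by positivity, fun u hu huS n hn x D hD => ?_⟩
  have hhB : ∀ i ≤ n, ‖iteratedFDerivWithin ℝ i h U (u x)‖ ≤ |B| := fun i hi =>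
    calc ‖iteratedFDerivWithin ℝ i h U (u x)‖
        ≤ ∑ i ∈ Finset.range (N + 1), ‖iteratedFDerivWithin ℝ i h U (u x)‖ :=
          Finset.single_le_sum (f := fun i => ‖iteratedFDerivWithin ℝ i h U (u x)‖)
            (fun _ _ => norm_nonneg _) (Finset.mem_range_succ_iff.2 (hi.trans hn))
      _ ≤ |B| := (le_abs_self _).trans ((hB _ (huS x)).trans (le_abs_self B))
  have hcomp := norm_iteratedFDerivWithin_comp_le (hh.of_le (by exact_mod_cast hn))
    (hu.of_le (by exact_mod_cast hn)).contDiffOn le_rfl hU.uniqueDiffOn uniqueDiffOn_univ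
    (fun y _ => hSU (huS y)) (mem_univ x) hhB (fun i hi hin => by
      rw [iteratedFDerivWithin_univ, norm_iteratedFDeriv_eq_norm_iteratedDeriv]
      exact hD i hi hin)
  rw [iteratedFDerivWithin_univ, norm_iteratedFDeriv_eq_norm_iteratedDeriv] at hcomp
  have hDn : 0 ≤ D ^ n := by
    rcases n.eq_zero_or_pos with rfl | hn0
    · simp
    · exact (norm_nonneg _).trans (hD n hn0 le_rfl)
  exact hcomp.trans (by gcongr)

lemma exists_norm_iteratedDeriv_comp_le (hU : IsOpen U) (hh : ContDiffOn ℝ N h U)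
    (hS : IsCompact S) (hSU : S ⊆ U) (M : ℝ) :
    ∃ C, 0 ≤ C ∧ ∀ u : ℝ → E, ContDiff ℝ N u → (∀ x, u x ∈ S) →
      ∀ n, 1 ≤ n → n ≤ N → ∀ x ε r, 0 ≤ ε → ε ≤ M → ε ≤ r →
        (∀ i, 1 ≤ i → i < n → ‖iteratedDeriv i u x‖ ≤ ε) → ‖iteratedDeriv n u x‖ ≤ r →
        ‖iteratedDeriv n (h ∘ u) x‖ ≤ C * r := by
  obtain ⟨C, hC, hcomp⟩ := exists_norm_iteratedDeriv_comp_le_pow hU hh hS hSU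
  set A := max 1 M
  have hA : 1 ≤ A := le_max_left 1 M
  refine ⟨C * A ^ N, by positivity, fun u hu huS n hn hnN x ε r hε hεM hεr hlow htop => ?_⟩
  have hn0 : n ≠ 0 := by omega
  have hr : 0 ≤ r := hε.trans hεr
  -- Faà di Bruno's formula is homogeneous when `∂ⁱu` has weight `i`, so we take the base
  -- `A * r ^ (1 / n)`, whose `n`-th power is linear in `r`.
  obtain ⟨s, hs, rfl⟩ : ∃ s, 0 ≤ s ∧ s ^ n = r :=
    ⟨r ^ ((n : ℝ)⁻¹), by positivity, Real.rpow_inv_natCast_pow hr hn0⟩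
  have hbase : ∀ i, 1 ≤ i → i ≤ n → ‖iteratedDeriv i u x‖ ≤ (A * s) ^ i := by
    intro i hi hin
    rcases hin.lt_or_eq with hlt | rfl
    · refine (hlow i hi hlt).trans ((pow_le_pow_iff_left₀ hε (by positivity) hn0).1 ?_)
      calc ε ^ n = ε ^ (n - i) * ε ^ i := (pow_sub_mul_pow ε hin).symm
        _ ≤ A ^ (n - i) * (s ^ n) ^ i := by gcongr; exact hεM.trans (le_max_right 1 M)
        _ ≤ A ^ (i * n) * (s ^ n) ^ i := by
          gcongr
          exact (n.sub_le i).trans (Nat.le_mul_of_pos_left n hi)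
        _ = ((A * s) ^ i) ^ n := by ring
    · rw [mul_pow]
      exact htop.trans (le_mul_of_one_le_left hr (one_le_pow₀ hA))
  calc ‖iteratedDeriv n (h ∘ u) x‖ ≤ C * (A * s) ^ n := hcomp u hu huS n hnN x _ hbase
    _ = C * A ^ n * s ^ n := by ring
    _ ≤ C * A ^ N * s ^ n := by gcongr

end Composition

section Leibniz

lemma iteratedDeriv_mul_sub_mul_iteratedDeriv {𝕜 𝔸 : Type*} [NontriviallyNormedField 𝕜]
    [NormedRing 𝔸] [NormedAlgebra 𝕜 𝔸] {v w : 𝕜 → 𝔸} {n : ℕ} {x : 𝕜}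
    (hv : ContDiffAt 𝕜 n v x) (hw : ContDiffAt 𝕜 n w x) :
    iteratedDeriv n (v * w) x - v x * iteratedDeriv n w x =
      ∑ i ∈ Finset.range n,
        n.choose (i + 1) * iteratedDeriv (i + 1) v x * iteratedDeriv (n - (i + 1)) w x := by
  simp [iteratedDeriv_mul hv hw, Finset.sum_range_succ']

lemma iteratedDeriv_iteratedDeriv {𝕜 F : Type*} [NontriviallyNormedField 𝕜]
    [NormedAddCommGroup F] [NormedSpace 𝕜 F] (m n : ℕ) (u : 𝕜 → F) :
    iteratedDeriv m (iteratedDeriv n u) = iteratedDeriv (m + n) u := by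
  simp only [iteratedDeriv_eq_iterate, Function.iterate_add_apply]

lemma contDiff_infty_iteratedDeriv {𝕜 F : Type*} [NontriviallyNormedField 𝕜]
    [NormedAddCommGroup F] [NormedSpace 𝕜 F] {u : 𝕜 → F} (hu : ContDiff 𝕜 ∞ u) (n : ℕ) :
    ContDiff 𝕜 ∞ (iteratedDeriv n u) := by
  rw [iteratedDeriv_eq_iterate]
  exact hu.iterate_deriv n

lemma periodic_iteratedDeriv {𝕜 F : Type*} [NontriviallyNormedField 𝕜]
    [NormedAddCommGroup F] [NormedSpace 𝕜 F] {u : 𝕜 → F} {T : 𝕜} (hu : Function.Periodic u T)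
    (n : ℕ) : Function.Periodic (iteratedDeriv n u) T := fun x => by
  rw [← congrFun (iteratedDeriv_comp_add_const n u T) x, funext hu]

end Leibniz

section Quasilinear

/-- The quasilinear second order operator `u ↦ Φ(u) u'' + g(u)` on functions of one variable,
written for the right-hand side of the rescaled curve-shortening equation. -/
noncomputable def quasilinearOp (Φ g u : ℝ → ℝ) : ℝ → ℝ :=
  fun x => Φ (u x) * iteratedDeriv 2 u x + g (u x)

/-- What is left of the `n`-th derivative of `Φ(u) u'' + g(u)` after its top order term
`Φ(u) ∂ⁿ⁺²u` has been removed. -/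
noncomputable def quasilinearRemainder (Φ g : ℝ → ℝ) (n : ℕ) (u : ℝ → ℝ) : ℝ → ℝ :=
  fun x => iteratedDeriv n (quasilinearOp Φ g u) x - Φ (u x) * iteratedDeriv (n + 2) u x

variable {Φ g u : ℝ → ℝ} {U S : Set ℝ} {L : ℕ}

lemma contDiff_quasilinearOp (hΦ : ContDiffOn ℝ ∞ Φ U) (hg : ContDiffOn ℝ ∞ g U)
    (hu : ContDiff ℝ ∞ u) (huU : ∀ x, u x ∈ U) : ContDiff ℝ ∞ (quasilinearOp Φ g u) :=
  ((hΦ.comp_contDiff hu huU).mul (contDiff_infty_iteratedDeriv hu 2)).add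
    (hg.comp_contDiff hu huU)

lemma periodic_quasilinearOp {T : ℝ} (hu : Function.Periodic u T) :
    Function.Periodic (quasilinearOp Φ g u) T := fun x => by
  simp only [quasilinearOp, hu x, periodic_iteratedDeriv hu 2 x]

lemma continuous_quasilinearRemainder (hΦ : ContDiffOn ℝ ∞ Φ U) (hg : ContDiffOn ℝ ∞ g U)
    (hu : ContDiff ℝ ∞ u) (huU : ∀ x, u x ∈ U) (n : ℕ) :
    Continuous (quasilinearRemainder Φ g n u) :=
  (contDiff_infty_iteratedDeriv (contDiff_quasilinearOp hΦ hg hu huU) n).continuous.sub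
    ((hΦ.comp_contDiff hu huU).continuous.mul (contDiff_infty_iteratedDeriv hu (n + 2)).continuous)

lemma quasilinearRemainder_eq_sum (hΦ : ContDiffOn ℝ ∞ Φ U) (hg : ContDiffOn ℝ ∞ g U)
    (hu : ContDiff ℝ ∞ u) (huU : ∀ x, u x ∈ U) (n : ℕ) (x : ℝ) :
    quasilinearRemainder Φ g n u x =
      ∑ i ∈ Finset.range n, n.choose (i + 1) * iteratedDeriv (i + 1) (Φ ∘ u) x *
        iteratedDeriv (n - (i + 1) + 2) u x + iteratedDeriv n (g ∘ u) x := by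
  have hΦu : ContDiff ℝ n (Φ ∘ u) := (hΦ.comp_contDiff hu huU).of_le (by exact_mod_cast le_top)
  have hgu : ContDiff ℝ n (g ∘ u) := (hg.comp_contDiff hu huU).of_le (by exact_mod_cast le_top)
  have hu₂ : ContDiff ℝ n (iteratedDeriv 2 u) :=
    (contDiff_infty_iteratedDeriv hu 2).of_le (by exact_mod_cast le_top)
  have hadd : iteratedDeriv n (quasilinearOp Φ g u) x =
      iteratedDeriv n ((Φ ∘ u) * iteratedDeriv 2 u) x + iteratedDeriv n (g ∘ u) x :=
    iteratedDeriv_add (hΦu.mul hu₂).contDiffAt hgu.contDiffAt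
  have hLeibniz := iteratedDeriv_mul_sub_mul_iteratedDeriv
    hΦu.contDiffAt (hu₂.contDiffAt (x := x))
  simp only [iteratedDeriv_iteratedDeriv, Function.comp_apply] at hLeibniz
  rw [quasilinearRemainder, hadd, ← hLeibniz]
  ring

lemma exists_abs_iteratedDeriv_comp_mul_le (hU : IsOpen U) (hΦ : ContDiffOn ℝ (L + 1 : ℕ) Φ U)
    (hS : IsCompact S) (hSU : S ⊆ U) (hL : 1 ≤ L) (M : ℝ) :
    ∃ C, ∀ u : ℝ → ℝ, ContDiff ℝ (L + 1 : ℕ) u → (∀ x, u x ∈ S) → ∀ x ε, 0 ≤ ε → ε ≤ M →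
      (∀ i, 1 ≤ i → i ≤ L → |iteratedDeriv i u x| ≤ ε) → ∀ i, 1 ≤ i → i ≤ L + 1 →
      |iteratedDeriv i (Φ ∘ u) x| * |iteratedDeriv (L + 1 - i + 2) u x| ≤
        C * (ε + |iteratedDeriv (L + 1) u x| + iteratedDeriv (L + 1) u x ^ 2 +
          |iteratedDeriv (L + 2) u x|) := by
  obtain ⟨A, hA, hcomp⟩ := exists_norm_iteratedDeriv_comp_le hU hΦ hS hSU M
  simp only [Real.norm_eq_abs] at hcomp
  refine ⟨A * (2 * |M| + 1), fun u hu huS x ε hε hεM hlow i hi hiL => ?_⟩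
  rw [abs_of_nonneg (hε.trans hεM), ← sq_abs (iteratedDeriv (L + 1) u x)]
  set a := |iteratedDeriv (L + 1) u x|
  set b := |iteratedDeriv (L + 2) u x|
  have ha : 0 ≤ a := abs_nonneg _
  have hb : 0 ≤ b := abs_nonneg _
  have hMa : 0 ≤ M * a ^ 2 := mul_nonneg (hε.trans hεM) (sq_nonneg a)
  -- Only the factor `∂^{L+2}u` is not controlled by `ε + a`, and it is paired with `∂(Φ ∘ u)`.
  rcases hi.eq_or_lt with rfl | hi1
  · calc |iteratedDeriv 1 (Φ ∘ u) x| * b ≤ A * ε * b := by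
          gcongr
          exact hcomp u hu huS 1 le_rfl hiL x ε ε hε hεM le_rfl
            (fun j hj hj1 => hlow j hj (hj1.le.trans hL)) (hlow 1 le_rfl hL)
      _ = A * (ε * b) := mul_assoc _ _ _
      _ ≤ A * ((2 * M + 1) * (ε + a + a ^ 2 + b)) := by gcongr <;> linarith [sq_nonneg a]
      _ = A * (2 * M + 1) * (ε + a + a ^ 2 + b) := (mul_assoc _ _ _).symm
  · have hle : ∀ j, 1 ≤ j → j ≤ L + 1 → |iteratedDeriv j u x| ≤ ε + a := fun j hj hjL => by
      rcases hjL.lt_or_eq with hlt | rfl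
      · exact (hlow j hj (Nat.lt_succ_iff.1 hlt)).trans (le_add_of_nonneg_right ha)
      · exact le_add_of_nonneg_left hε
    calc |iteratedDeriv i (Φ ∘ u) x| * |iteratedDeriv (L + 1 - i + 2) u x|
        ≤ A * (ε + a) * (ε + a) := by
          gcongr
          · exact hcomp u hu huS i hi hiL x ε _ hε hεM (le_add_of_nonneg_right ha)
              (fun j hj hji => hlow j hj (by omega)) (hle i hi hiL)
          · exact hle _ (by omega) (by omega)
      _ = A * (ε + a) ^ 2 := by ring
      _ ≤ A * ((2 * M + 1) * (ε + a + a ^ 2 + b)) := by gcongr; nlinarith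
      _ = A * (2 * M + 1) * (ε + a + a ^ 2 + b) := (mul_assoc _ _ _).symm

lemma exists_abs_quasilinearRemainder_le (hU : IsOpen U) (hΦ : ContDiffOn ℝ ∞ Φ U)
    (hg : ContDiffOn ℝ ∞ g U) (hS : IsCompact S) (hSU : S ⊆ U) (hL : 1 ≤ L) (M : ℝ) :
    ∃ C, ∀ u : ℝ → ℝ, ContDiff ℝ ∞ u → (∀ x, u x ∈ S) → ∀ x ε, 0 ≤ ε → ε ≤ M →
      (∀ i, 1 ≤ i → i ≤ L → |iteratedDeriv i u x| ≤ ε) →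
      |quasilinearRemainder Φ g (L + 1) u x| ≤
        C * (ε + |iteratedDeriv (L + 1) u x| + iteratedDeriv (L + 1) u x ^ 2 +
          |iteratedDeriv (L + 2) u x|) := by
  have htop : ((L + 1 : ℕ) : WithTop ℕ∞) ≤ ∞ := by exact_mod_cast le_top
  obtain ⟨A, hΦcomp⟩ := exists_abs_iteratedDeriv_comp_mul_le hU (hΦ.of_le htop) hS hSU hL M
  obtain ⟨B, -, hgcomp⟩ := exists_norm_iteratedDeriv_comp_le hU (hg.of_le htop) hS hSU M
  refine ⟨∑ i ∈ Finset.range (L + 1), (L + 1).choose (i + 1) * A + B,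
    fun u hu huS x ε hε hεM hlow => ?_⟩
  have hprod := hΦcomp u (hu.of_le htop) huS x ε hε hεM hlow
  set a := iteratedDeriv (L + 1) u x with ha
  set b := iteratedDeriv (L + 2) u x
  have hgu : |iteratedDeriv (L + 1) (g ∘ u) x| ≤ B * (ε + |a| + a ^ 2 + |b|) :=
    hgcomp u (hu.of_le htop) huS (L + 1) (by omega) le_rfl x ε _ hε hεM
      (by linarith [abs_nonneg a, sq_nonneg a, abs_nonneg b])
      (fun j hj hji => hlow j hj (by omega))
      (by rw [Real.norm_eq_abs, ← ha]; linarith [sq_nonneg a, abs_nonneg b])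
  rw [quasilinearRemainder_eq_sum hΦ hg hu (fun x => hSU (huS x)), add_mul, Finset.sum_mul]
  refine (abs_add_le _ _).trans (add_le_add ?_ hgu)
  refine (Finset.abs_sum_le_sum_abs _ _).trans (Finset.sum_le_sum fun i hi => ?_)
  simp only [abs_mul, Nat.abs_cast, mul_assoc]
  exact mul_le_mul_of_nonneg_left (hprod (i + 1) i.succ_pos (Finset.mem_range.1 hi))
    (Nat.cast_nonneg _)

lemma exists_sq_quasilinearRemainder_le (hU : IsOpen U) (hΦ : ContDiffOn ℝ ∞ Φ U)
    (hg : ContDiffOn ℝ ∞ g U) (hS : IsCompact S) (hSU : S ⊆ U) (hL : 1 ≤ L) (M : ℝ) :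
    ∃ C, 0 ≤ C ∧ ∀ u : ℝ → ℝ, ContDiff ℝ ∞ u → (∀ x, u x ∈ S) → ∀ x ε, 0 ≤ ε → ε ≤ M →
      (∀ i, 1 ≤ i → i ≤ L → |iteratedDeriv i u x| ≤ ε) →
      quasilinearRemainder Φ g (L + 1) u x ^ 2 ≤
        C * (ε ^ 2 + iteratedDeriv (L + 1) u x ^ 2 + (iteratedDeriv (L + 1) u x ^ 2) ^ 2 +
          iteratedDeriv (L + 2) u x ^ 2) := by
  obtain ⟨C, hC⟩ := exists_abs_quasilinearRemainder_le hU hΦ hg hS hSU hL M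
  refine ⟨4 * C ^ 2, by positivity, fun u hu huS x ε hε hεM hlow => ?_⟩
  have hR := hC u hu huS x ε hε hεM hlow
  set a := iteratedDeriv (L + 1) u x
  set b := iteratedDeriv (L + 2) u x
  calc quasilinearRemainder Φ g (L + 1) u x ^ 2
      ≤ (C * (ε + |a| + a ^ 2 + |b|)) ^ 2 := by
        rw [← sq_abs]
        gcongr
    _ = C ^ 2 * (ε + |a| + a ^ 2 + |b|) ^ 2 := mul_pow _ _ _
    _ ≤ C ^ 2 * (4 * (ε ^ 2 + |a| ^ 2 + (a ^ 2) ^ 2 + |b| ^ 2)) := by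
        gcongr
        linarith [sq_nonneg (ε - |a|), sq_nonneg (ε - a ^ 2), sq_nonneg (ε - |b|),
          sq_nonneg (|a| - a ^ 2), sq_nonneg (|a| - |b|), sq_nonneg (a ^ 2 - |b|)]
    _ = 4 * C ^ 2 * (ε ^ 2 + a ^ 2 + (a ^ 2) ^ 2 + b ^ 2) := by
        rw [sq_abs, sq_abs]
        ring

end Quasilinear

section PeriodicIntegral

lemma sq_intervalIntegral_le {f : ℝ → ℝ} {a b : ℝ} (hab : a ≤ b) (hf : Continuous f) :
    (∫ x in a..b, f x) ^ 2 ≤ (b - a) * ∫ x in a..b, f x ^ 2 := by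
  rcases hab.eq_or_lt with rfl | hlt
  · simp
  set I := ∫ x in a..b, f x with hI
  have hsq : 0 ≤ ∫ x in a..b, ((b - a) * f x - I) ^ 2 :=
    intervalIntegral.integral_nonneg hab fun x _ => sq_nonneg _
  have hexpand : ∫ x in a..b, ((b - a) * f x - I) ^ 2 =
      (b - a) * ((b - a) * (∫ x in a..b, f x ^ 2) - I ^ 2) := by
    have hpt : ∀ x, ((b - a) * f x - I) ^ 2 =
        (b - a) ^ 2 * f x ^ 2 - 2 * (b - a) * I * f x + I ^ 2 := fun x => by ring
    simp only [hpt]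
    rw [intervalIntegral.integral_add (Continuous.intervalIntegrable (by fun_prop) _ _)
        intervalIntegrable_const,
      intervalIntegral.integral_sub (Continuous.intervalIntegrable (by fun_prop) _ _)
        (Continuous.intervalIntegrable (by fun_prop) _ _)]
    simp only [intervalIntegral.integral_const_mul, intervalIntegral.integral_const, smul_eq_mul,
      ← hI]
    ring
  rw [hexpand] at hsq
  linarith [nonneg_of_mul_nonneg_right hsq (sub_pos.2 hlt)]

lemma integral_mul_deriv_eq_neg_of_periodic {f g : ℝ → ℝ} {T : ℝ} (hf : ContDiff ℝ 1 f)
    (hg : ContDiff ℝ 1 g) (hfT : Function.Periodic f T) (hgT : Function.Periodic g T) :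
    ∫ x in (0 : ℝ)..T, f x * deriv g x = -∫ x in (0 : ℝ)..T, deriv f x * g x := by
  rw [intervalIntegral.integral_mul_deriv_eq_deriv_mul
    (fun x _ => (hf.differentiable one_ne_zero x).hasDerivAt)
    (fun x _ => (hg.differentiable one_ne_zero x).hasDerivAt)
    ((hf.continuous_deriv le_rfl).intervalIntegrable _ _)
    ((hg.continuous_deriv le_rfl).intervalIntegrable _ _), hfT.eq, hgT.eq, sub_self, zero_sub]

lemma sq_deriv_le_mul_integral_sq {w : ℝ → ℝ} {T : ℝ} (hT : 0 < T) (hw : ContDiff ℝ 2 w)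
    (hwT : Function.Periodic w T) (x : ℝ) :
    deriv w x ^ 2 ≤ T * ∫ y in (0 : ℝ)..T, iteratedDeriv 2 w y ^ 2 := by
  have hw₂ : Continuous (iteratedDeriv 2 w) := hw.continuous_iteratedDeriv 2 le_rfl
  have hw₁ : Differentiable ℝ (deriv w) := by
    simpa only [iteratedDeriv_one] using hw.differentiable_iteratedDeriv 1 (by norm_num)
  obtain ⟨ξ, ⟨hxξ, hξT⟩, hξ⟩ := exists_deriv_eq_zero (lt_add_of_pos_right x hT)
    hw.continuous.continuousOn (hwT x).symm
  have hftc : ∫ y in x..ξ, iteratedDeriv 2 w y = -deriv w x := by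
    rw [iteratedDeriv_succ, iteratedDeriv_one] at hw₂ ⊢
    rw [intervalIntegral.integral_deriv_eq_sub (fun y _ => hw₁ y) (hw₂.intervalIntegrable _ _),
      hξ, zero_sub]
  have hsqT : Function.Periodic (fun y => iteratedDeriv 2 w y ^ 2) T := fun y => by
    simp only [periodic_iteratedDeriv hwT 2 y]
  calc deriv w x ^ 2 = (∫ y in x..ξ, iteratedDeriv 2 w y) ^ 2 := by rw [hftc, neg_sq]
    _ ≤ (ξ - x) * ∫ y in x..ξ, iteratedDeriv 2 w y ^ 2 := sq_intervalIntegral_le hxξ.le hw₂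
    _ ≤ T * ∫ y in x..x + T, iteratedDeriv 2 w y ^ 2 := by
      gcongr
      · exact intervalIntegral.integral_nonneg hxξ.le fun y _ => sq_nonneg _
      · linarith
      · exact intervalIntegral.integral_mono_interval le_rfl hxξ.le hξT.le
          (Eventually.of_forall fun y => sq_nonneg _)
          ((hw₂.pow 2).intervalIntegrable _ _)
    _ = T * ∫ y in (0 : ℝ)..T, iteratedDeriv 2 w y ^ 2 := by
      rw [hsqT.intervalIntegral_add_eq x 0, zero_add]

end PeriodicIntegral

section DerivEnergy

/-- The squared `L²` norm of the `m`-th derivative of `u` over one period `[0, T]`. -/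
noncomputable def derivEnergy (T : ℝ) (m : ℕ) (u : ℝ → ℝ) : ℝ :=
  ∫ x in (0 : ℝ)..T, iteratedDeriv m u x ^ 2

variable {u v : ℝ → ℝ} {T : ℝ}

lemma derivEnergy_nonneg (hT : 0 ≤ T) (m : ℕ) (u : ℝ → ℝ) : 0 ≤ derivEnergy T m u :=
  intervalIntegral.integral_nonneg hT fun _ _ => sq_nonneg _

lemma integral_iteratedDeriv_mul_succ (hu : ContDiff ℝ ∞ u) (hv : ContDiff ℝ ∞ v)
    (huT : Function.Periodic u T) (hvT : Function.Periodic v T) (m n : ℕ) :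
    ∫ x in (0 : ℝ)..T, iteratedDeriv m u x * iteratedDeriv (n + 1) v x =
      -∫ x in (0 : ℝ)..T, iteratedDeriv (m + 1) u x * iteratedDeriv n v x := by
  rw [iteratedDeriv_succ, iteratedDeriv_succ]
  exact integral_mul_deriv_eq_neg_of_periodic
    ((contDiff_infty_iteratedDeriv hu m).of_le (by exact_mod_cast le_top))
    ((contDiff_infty_iteratedDeriv hv n).of_le (by exact_mod_cast le_top))
    (periodic_iteratedDeriv huT m) (periodic_iteratedDeriv hvT n)

lemma sq_iteratedDeriv_le_mul_derivEnergy (hT : 0 < T) (hu : ContDiff ℝ ∞ u)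
    (huT : Function.Periodic u T) (m : ℕ) (x : ℝ) :
    iteratedDeriv (m + 1) u x ^ 2 ≤ T * derivEnergy T (m + 2) u := by
  have h := sq_deriv_le_mul_integral_sq hT
    ((contDiff_infty_iteratedDeriv hu m).of_le (WithTop.coe_le_coe.2 le_top))
    (periodic_iteratedDeriv huT m) x
  rwa [iteratedDeriv_iteratedDeriv, ← iteratedDeriv_succ, add_comm 2 m] at h

lemma mul_derivEnergy_succ_le (hT : 0 ≤ T) (hu : ContDiff ℝ ∞ u) (huT : Function.Periodic u T)
    (m : ℕ) (c : ℝ) {φ : ℝ} (hφ : 0 < φ) :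
    c * derivEnergy T (m + 1) u ≤
      φ * derivEnergy T (m + 2) u + c ^ 2 / (4 * φ) * derivEnergy T m u := by
  have hd : ∀ n, Continuous (iteratedDeriv n u) := fun n =>
    (contDiff_infty_iteratedDeriv hu n).continuous
  have hB : derivEnergy T (m + 1) u =
      -∫ x in (0 : ℝ)..T, iteratedDeriv (m + 2) u x * iteratedDeriv m u x := by
    rw [← integral_iteratedDeriv_mul_succ hu hu huT huT (m + 1) m]
    simp only [derivEnergy, sq]
  have hpt : ∀ x, -c * (iteratedDeriv (m + 2) u x * iteratedDeriv m u x) ≤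
      φ * iteratedDeriv (m + 2) u x ^ 2 + c ^ 2 / (4 * φ) * iteratedDeriv m u x ^ 2 := fun x => by
    have hsq : 0 ≤ (2 * φ * iteratedDeriv (m + 2) u x + c * iteratedDeriv m u x) ^ 2 / (4 * φ) := by
      positivity
    field_simp at hsq ⊢
    linarith
  calc c * derivEnergy T (m + 1) u
      = ∫ x in (0 : ℝ)..T, -c * (iteratedDeriv (m + 2) u x * iteratedDeriv m u x) := by
        rw [hB, intervalIntegral.integral_const_mul]; ring
    _ ≤ ∫ x in (0 : ℝ)..T,
        (φ * iteratedDeriv (m + 2) u x ^ 2 + c ^ 2 / (4 * φ) * iteratedDeriv m u x ^ 2) :=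
        intervalIntegral.integral_mono_on hT
          (Continuous.intervalIntegrable (by fun_prop) _ _)
          (Continuous.intervalIntegrable (by fun_prop) _ _) fun x _ => hpt x
    _ = φ * derivEnergy T (m + 2) u + c ^ 2 / (4 * φ) * derivEnergy T m u := by
        rw [intervalIntegral.integral_add (Continuous.intervalIntegrable (by fun_prop) _ _)
          (Continuous.intervalIntegrable (by fun_prop) _ _)]
        simp only [intervalIntegral.integral_const_mul, derivEnergy]

end DerivEnergy

section EnergyInequality

variable {Φ g : ℝ → ℝ} {U S : Set ℝ} {L : ℕ} {T : ℝ}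

lemma exists_integral_sq_quasilinearRemainder_le (hT : 0 < T) (hU : IsOpen U)
    (hΦ : ContDiffOn ℝ ∞ Φ U) (hg : ContDiffOn ℝ ∞ g U) (hS : IsCompact S) (hSU : S ⊆ U)
    (hL : 1 ≤ L) (M : ℝ) :
    ∃ C, ∀ u : ℝ → ℝ, ContDiff ℝ ∞ u → Function.Periodic u T → (∀ x, u x ∈ S) →
      ∀ ε, 0 ≤ ε → ε ≤ M → (∀ i, 1 ≤ i → i ≤ L → ∀ x, |iteratedDeriv i u x| ≤ ε) →
      derivEnergy T (L + 1) u ≤ ε ^ 2 →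
      ∫ x in (0 : ℝ)..T, quasilinearRemainder Φ g (L + 1) u x ^ 2 ≤
        C * (ε ^ 2 + derivEnergy T (L + 2) u) := by
  obtain ⟨C, hC, hR⟩ := exists_sq_quasilinearRemainder_le hU hΦ hg hS hSU hL M
  refine ⟨C * (T + T * M ^ 2 + 1), fun u hu huT huS ε hε hεM hlow hA => ?_⟩
  set A := derivEnergy T (L + 1) u with hA_def
  set B := derivEnergy T (L + 2) u with hB_def
  have hB : 0 ≤ B := derivEnergy_nonneg hT.le _ _
  have hd : ∀ n, Continuous (iteratedDeriv n u) := fun n =>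
    (contDiff_infty_iteratedDeriv hu n).continuous
  have hRc := continuous_quasilinearRemainder hΦ hg hu (fun x => hSU (huS x)) (L + 1)
  -- The quartic term is absorbed by the Sobolev inequality `(∂^{L+1}u)² ≤ T * B`.
  have hpt : ∀ x, quasilinearRemainder Φ g (L + 1) u x ^ 2 ≤ C * (ε ^ 2 +
      (1 + T * B) * iteratedDeriv (L + 1) u x ^ 2 + iteratedDeriv (L + 2) u x ^ 2) := fun x => by
    have hsup : iteratedDeriv (L + 1) u x ^ 2 ≤ T * B :=
      sq_iteratedDeriv_le_mul_derivEnergy hT hu huT L x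
    refine (hR u hu huS x ε hε hεM fun i hi hiL => hlow i hi hiL x).trans
      (mul_le_mul_of_nonneg_left ?_ hC)
    linarith [mul_le_mul_of_nonneg_right hsup (sq_nonneg (iteratedDeriv (L + 1) u x))]
  have hTBA : T * B * A ≤ T * B * M ^ 2 := by
    gcongr
    exact hA.trans (by gcongr)
  calc ∫ x in (0 : ℝ)..T, quasilinearRemainder Φ g (L + 1) u x ^ 2
      ≤ ∫ x in (0 : ℝ)..T, C * (ε ^ 2 +
        (1 + T * B) * iteratedDeriv (L + 1) u x ^ 2 + iteratedDeriv (L + 2) u x ^ 2) :=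
        intervalIntegral.integral_mono_on hT.le
          (Continuous.intervalIntegrable (by fun_prop) _ _)
          (Continuous.intervalIntegrable (by fun_prop) _ _) fun x _ => hpt x
    _ = C * (T * ε ^ 2 + (1 + T * B) * A + B) := by
        rw [intervalIntegral.integral_const_mul, intervalIntegral.integral_add
          (Continuous.intervalIntegrable (by fun_prop) _ _)
          (Continuous.intervalIntegrable (by fun_prop) _ _), intervalIntegral.integral_add
          intervalIntegrable_const (Continuous.intervalIntegrable (by fun_prop) _ _)]
        simp [derivEnergy, hA_def, hB_def]
    _ ≤ C * ((T + T * M ^ 2 + 1) * (ε ^ 2 + B)) := by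
        gcongr
        linarith [mul_nonneg hT.le hB, mul_nonneg hT.le (mul_nonneg (sq_nonneg M) (sq_nonneg ε))]
    _ = C * (T + T * M ^ 2 + 1) * (ε ^ 2 + B) := (mul_assoc _ _ _).symm

lemma neg_two_mul_mul_add_le {φ q : ℝ} (hφ : 0 < φ) (hq : φ ≤ q) (d R : ℝ) :
    -(2 * (d * (q * d + R))) ≤ -φ * d ^ 2 + R ^ 2 / φ := by
  have hsq : 0 ≤ (φ * d + R) ^ 2 / φ := by positivity
  have hexpand : (φ * d + R) ^ 2 / φ = φ * d ^ 2 + 2 * d * R + R ^ 2 / φ := by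
    field_simp
    ring
  nlinarith [mul_le_mul_of_nonneg_right hq (sq_nonneg d)]

lemma integral_two_mul_iteratedDeriv_mul_quasilinearOp_le {φ : ℝ} {u : ℝ → ℝ} (hT : 0 ≤ T)
    (hφ : 0 < φ) (hφu : ∀ x, φ ≤ Φ (u x)) (hΦ : ContDiffOn ℝ ∞ Φ U) (hg : ContDiffOn ℝ ∞ g U)
    (hu : ContDiff ℝ ∞ u) (huT : Function.Periodic u T) (huU : ∀ x, u x ∈ U) (n : ℕ) :
    ∫ x in (0 : ℝ)..T,
        2 * (iteratedDeriv (n + 1) u x * iteratedDeriv (n + 1) (quasilinearOp Φ g u) x) ≤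
      -φ * derivEnergy T (n + 2) u +
        (∫ x in (0 : ℝ)..T, quasilinearRemainder Φ g n u x ^ 2) / φ := by
  have hQ := contDiff_quasilinearOp hΦ hg hu huU
  have hdu : Continuous (iteratedDeriv (n + 2) u) :=
    (contDiff_infty_iteratedDeriv hu _).continuous
  have hdQ : Continuous (iteratedDeriv n (quasilinearOp Φ g u)) :=
    (contDiff_infty_iteratedDeriv hQ _).continuous
  have hR := continuous_quasilinearRemainder hΦ hg hu huU n
  calc _ = ∫ x in (0 : ℝ)..T, -(2 * (iteratedDeriv (n + 2) u x *
          iteratedDeriv n (quasilinearOp Φ g u) x)) := by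
        rw [intervalIntegral.integral_neg, intervalIntegral.integral_const_mul,
          intervalIntegral.integral_const_mul,
          integral_iteratedDeriv_mul_succ hu hQ huT (periodic_quasilinearOp huT), mul_neg]
    _ ≤ ∫ x in (0 : ℝ)..T, (-φ * iteratedDeriv (n + 2) u x ^ 2 +
          quasilinearRemainder Φ g n u x ^ 2 / φ) :=
        intervalIntegral.integral_mono_on hT
          (Continuous.intervalIntegrable (by fun_prop) _ _)
          (Continuous.intervalIntegrable (by fun_prop) _ _) fun x _ => by
            simpa only [quasilinearRemainder, add_sub_cancel] using neg_two_mul_mul_add_le hφ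
              (hφu x) (iteratedDeriv (n + 2) u x) (quasilinearRemainder Φ g n u x)
    _ = _ := by
        rw [intervalIntegral.integral_add (Continuous.intervalIntegrable (by fun_prop) _ _)
          (Continuous.intervalIntegrable (by fun_prop) _ _),
          intervalIntegral.integral_const_mul, intervalIntegral.integral_div, derivEnergy]

lemma exists_integral_two_mul_iteratedDeriv_mul_quasilinearOp_le {φ : ℝ} (hT : 0 < T)
    (hU : IsOpen U) (hΦ : ContDiffOn ℝ ∞ Φ U) (hg : ContDiffOn ℝ ∞ g U) (hS : IsCompact S)
    (hSU : S ⊆ U) (hφ : 0 < φ) (hφS : ∀ y ∈ S, φ ≤ Φ y) (hL : 1 ≤ L) (M lam : ℝ) :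
    ∃ C, ∀ u : ℝ → ℝ, ContDiff ℝ ∞ u → Function.Periodic u T → (∀ x, u x ∈ S) →
      ∀ ε, 0 ≤ ε → ε ≤ M → (∀ i, 1 ≤ i → i ≤ L → ∀ x, |iteratedDeriv i u x| ≤ ε) →
      derivEnergy T (L + 1) u ≤ ε ^ 2 →
      ∫ x in (0 : ℝ)..T,
        2 * (iteratedDeriv (L + 2) u x * iteratedDeriv (L + 2) (quasilinearOp Φ g u) x) ≤
        -lam * derivEnergy T (L + 2) u + C * ε ^ 2 := by
  obtain ⟨C, hR⟩ := exists_integral_sq_quasilinearRemainder_le hT hU hΦ hg hS hSU hL M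
  refine ⟨C / φ + (C / φ + lam) ^ 2 / (4 * φ),
    fun u hu huT huS ε hε hεM hlow hA => ?_⟩
  have hdiss := integral_two_mul_iteratedDeriv_mul_quasilinearOp_le hT.le hφ
    (fun x => hφS _ (huS x)) hΦ hg hu huT (fun x => hSU (huS x)) (L + 1)
  have hR' := div_le_div_of_nonneg_right (hR u hu huT huS ε hε hεM hlow hA) hφ.le
  have hinterp := mul_derivEnergy_succ_le hT.le hu huT (L + 1) (C / φ + lam) hφ
  have hA' : (C / φ + lam) ^ 2 / (4 * φ) * derivEnergy T (L + 1) u ≤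
      (C / φ + lam) ^ 2 / (4 * φ) * ε ^ 2 := by gcongr
  rw [mul_div_right_comm] at hR'
  linarith

end EnergyInequality

section TwoVariables

variable {E : Type*} [NormedAddCommGroup E] [NormedSpace ℝ E] {f : ℝ → ℝ → E} {I : Set ℝ}
  {x t : ℝ}

lemma contDiff_slice {n : WithTop ℕ∞} (hf : ContDiffOn ℝ n (Function.uncurry f) (univ ×ˢ I))
    (ht : t ∈ I) : ContDiff ℝ n fun x => f x t :=
  hf.comp_contDiff (contDiff_id.prodMk contDiff_const) fun _ => ⟨mem_univ _, ht⟩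

lemma contDiffAt_uncurry {n : WithTop ℕ∞} (hf : ContDiffOn ℝ n (Function.uncurry f) (univ ×ˢ I))
    (ht : I ∈ 𝓝 t) (x : ℝ) : ContDiffAt ℝ n (Function.uncurry f) (x, t) :=
  hf.contDiffAt (prod_mem_nhds univ_mem ht)

lemma hasDerivAt_fst (hf : DifferentiableAt ℝ (Function.uncurry f) (x, t)) :
    HasDerivAt (fun y => f y t) (fderiv ℝ (Function.uncurry f) (x, t) (1, 0)) x :=
  HasFDerivAt.comp_hasDerivAt (f := fun y => (y, t)) x hf.hasFDerivAt
    ((hasDerivAt_id x).prodMk (hasDerivAt_const x t))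

lemma hasDerivAt_snd (hf : DifferentiableAt ℝ (Function.uncurry f) (x, t)) :
    HasDerivAt (f x) (fderiv ℝ (Function.uncurry f) (x, t) (0, 1)) t :=
  HasFDerivAt.comp_hasDerivAt (f := fun s => (x, s)) t hf.hasFDerivAt
    ((hasDerivAt_const t x).prodMk (hasDerivAt_id t))

lemma contDiffOn_deriv_fst (hI : UniqueDiffOn ℝ I)
    (hf : ContDiffOn ℝ ∞ (Function.uncurry f) (univ ×ˢ I)) :
    ContDiffOn ℝ ∞ (Function.uncurry fun x t => deriv (fun y => f y t) x) (univ ×ˢ I) := by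
  refine ((hf.fderivWithin (m := ∞) (uniqueDiffOn_univ.prod hI) (by simp)).clm_apply
    (contDiffOn_const (c := ((1 : ℝ), (0 : ℝ))))).congr fun q hq => ?_
  have hline : HasDerivWithinAt (fun y : ℝ => (y, q.2)) (1, 0) univ q.1 :=
    ((hasDerivAt_id q.1).prodMk (hasDerivAt_const q.1 q.2)).hasDerivWithinAt
  have hmaps : MapsTo (fun y : ℝ => (y, q.2)) univ (univ ×ˢ I) := fun y _ => ⟨mem_univ y, hq.2⟩
  exact (((hf.differentiableOn (by simp) q hq).hasFDerivWithinAt.comp_hasDerivWithinAt q.1 hline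
    hmaps).hasDerivAt univ_mem).deriv

lemma contDiffOn_iteratedDeriv_fst (hI : UniqueDiffOn ℝ I)
    (hf : ContDiffOn ℝ ∞ (Function.uncurry f) (univ ×ˢ I)) (m : ℕ) :
    ContDiffOn ℝ ∞ (Function.uncurry fun x t => iteratedDeriv m (fun y => f y t) x)
      (univ ×ˢ I) := by
  induction m with
  | zero => simpa only [iteratedDeriv_zero] using hf
  | succ m ih => simpa only [iteratedDeriv_succ] using contDiffOn_deriv_fst hI ih

lemma deriv_deriv_comm (hf : ContDiffAt ℝ 2 (Function.uncurry f) (x, t)) :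
    deriv (fun s => deriv (fun y => f y s) x) t = deriv (fun y => deriv (f y) t) x := by
  set F := Function.uncurry f
  have hdiff : ∀ᶠ q in 𝓝 (x, t), DifferentiableAt ℝ F q :=
    (hf.eventually (by simp)).mono fun q hq => hq.differentiableAt two_ne_zero
  have hF' : HasFDerivAt (fderiv ℝ F) (fderiv ℝ (fderiv ℝ F) (x, t)) (x, t) :=
    ((hf.fderiv_right (m := 1) (by norm_num)).differentiableAt one_ne_zero).hasFDerivAt
  have hF'v : ∀ v, HasFDerivAt (fun q => fderiv ℝ F q v)
      ((fderiv ℝ (fderiv ℝ F) (x, t)).flip v) (x, t) := fun v => by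
    simpa using hF'.clm_apply (hasFDerivAt_const v (x, t))
  have hts : HasDerivAt (fun s => fderiv ℝ F (x, s) (1, 0))
      (fderiv ℝ (fderiv ℝ F) (x, t) (0, 1) (1, 0)) t :=
    HasFDerivAt.comp_hasDerivAt (f := fun s => (x, s)) t (hF'v _)
      ((hasDerivAt_const t x).prodMk (hasDerivAt_id t))
  have hxs : HasDerivAt (fun y => fderiv ℝ F (y, t) (0, 1))
      (fderiv ℝ (fderiv ℝ F) (x, t) (1, 0) (0, 1)) x :=
    HasFDerivAt.comp_hasDerivAt (f := fun y => (y, t)) x (hF'v _)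
      ((hasDerivAt_id x).prodMk (hasDerivAt_const x t))
  have hfst : (fun s => deriv (fun y => f y s) x) =ᶠ[𝓝 t] fun s => fderiv ℝ F (x, s) (1, 0) :=
    ((Continuous.prodMk_right x).tendsto t |>.eventually hdiff).mono fun s hs =>
      (hasDerivAt_fst hs).deriv
  have hsnd : (fun y => deriv (f y) t) =ᶠ[𝓝 x] fun y => fderiv ℝ F (y, t) (0, 1) :=
    ((Continuous.prodMk_left t).tendsto x |>.eventually hdiff).mono fun y hy =>
      (hasDerivAt_snd hy).deriv
  rw [hfst.deriv_eq, hsnd.deriv_eq, hts.deriv, hxs.deriv]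
  exact hf.isSymmSndFDerivAt (by rw [minSmoothness_of_isRCLikeNormedField]) _ _

lemma deriv_iteratedDeriv_comm (hI : UniqueDiffOn ℝ I)
    (hf : ContDiffOn ℝ ∞ (Function.uncurry f) (univ ×ˢ I)) (ht : I ∈ 𝓝 t) (m : ℕ) (x : ℝ) :
    deriv (fun s => iteratedDeriv m (fun y => f y s) x) t =
      iteratedDeriv m (fun y => deriv (f y) t) x := by
  induction m generalizing x with
  | zero => simp only [iteratedDeriv_zero]
  | succ m ih =>
    have hm := contDiffAt_uncurry (contDiffOn_iteratedDeriv_fst hI hf m) ht x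
    simp only [iteratedDeriv_succ, deriv_deriv_comm (hm.of_le (WithTop.coe_le_coe.2 le_top)), ih]

lemma continuousOn_intervalIntegral (hf : ContinuousOn (Function.uncurry f) (univ ×ˢ I))
    (a b : ℝ) : ContinuousOn (fun t => ∫ x in a..b, f x t) I := by
  rw [continuousOn_iff_continuous_domRestrict]
  exact intervalIntegral.continuous_parametric_intervalIntegral_of_continuous'
    (f := fun (t : I) x => f x t) (hf.comp_continuous (f := fun q : I × ℝ => (q.2, (q.1 : ℝ)))
      (by fun_prop) fun q => ⟨mem_univ _, q.1.2⟩) a b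

lemma hasDerivAt_intervalIntegral (hf : ContDiffOn ℝ 1 (Function.uncurry f) (univ ×ˢ I))
    (ht : I ∈ 𝓝 t) (a b : ℝ) :
    HasDerivAt (fun s => ∫ x in a..b, f x s) (∫ x in a..b, deriv (f x) t) t := by
  set J := interior I
  have hfJ := hf.mono (prod_mono_right (interior_subset (s := I)))
  have hderiv : ∀ x, ∀ s ∈ J, HasDerivAt (f x) (deriv (f x) s) s := fun x s hs =>
    (hasDerivAt_snd ((contDiffAt_uncurry hf (mem_interior_iff_mem_nhds.1 hs) x).differentiableAt
      one_ne_zero)).differentiableAt.hasDerivAt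
  have hcont : ContinuousOn (Function.uncurry fun x s => deriv (f x) s) (univ ×ˢ J) :=
    ((hfJ.continuousOn_fderiv_of_isOpen (isOpen_univ.prod isOpen_interior) le_rfl).clm_apply
      (continuousOn_const (c := ((0 : ℝ), (1 : ℝ))))).congr fun q hq =>
        (hasDerivAt_snd ((contDiffAt_uncurry hf (mem_interior_iff_mem_nhds.1 hq.2)
          q.1).differentiableAt one_ne_zero)).deriv
  have hslice : ∀ {h : ℝ → ℝ → E}, ContinuousOn (Function.uncurry h) (univ ×ˢ J) →
      ∀ s ∈ J, Continuous fun x => h x s := fun hh s hs =>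
    hh.comp_continuous (f := fun x => (x, s)) (by fun_prop) fun x => ⟨mem_univ x, hs⟩
  obtain ⟨k, hk, hkJ, hkc⟩ := local_compact_nhds (interior_mem_nhds.2 ht)
  obtain ⟨B, hB⟩ := ((isCompact_uIcc (a := a) (b := b)).prod hkc).exists_bound_of_continuousOn
    (hcont.mono (prod_mono (subset_univ _) hkJ))
  have htJ : t ∈ J := mem_interior_iff_mem_nhds.2 ht
  exact (intervalIntegral.hasDerivAt_integral_of_dominated_loc_of_deriv_le (bound := fun _ => B) hk
    (mem_of_superset hk fun s hs =>
      (hslice hfJ.continuousOn s (hkJ hs)).aestronglyMeasurable)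
    ((hslice hfJ.continuousOn t htJ).intervalIntegrable _ _)
    (hslice hcont t htJ).aestronglyMeasurable
    (Eventually.of_forall fun x hx s hs => hB (x, s) ⟨uIoc_subset_uIcc hx, hs⟩)
    intervalIntegrable_const
    (Eventually.of_forall fun x _ s hs => hderiv x s (hkJ hs))).2

end TwoVariables

section Evolution

lemma continuousOn_derivEnergy {K : ℝ → ℝ → ℝ} {I : Set ℝ} (hI : UniqueDiffOn ℝ I)
    (hK : ContDiffOn ℝ ∞ (Function.uncurry K) (univ ×ˢ I)) (T : ℝ) (m : ℕ) :
    ContinuousOn (fun t => derivEnergy T m fun x => K x t) I :=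
  continuousOn_intervalIntegral (f := fun x t => iteratedDeriv m (fun y => K y t) x ^ 2)
    ((contDiffOn_iteratedDeriv_fst hI hK m).pow 2).continuousOn 0 T

lemma hasDerivAt_derivEnergy {K : ℝ → ℝ → ℝ} {I : Set ℝ} {t : ℝ} (hI : UniqueDiffOn ℝ I)
    (hK : ContDiffOn ℝ ∞ (Function.uncurry K) (univ ×ˢ I)) (ht : I ∈ 𝓝 t) (T : ℝ) (m : ℕ) :
    HasDerivAt (fun s => derivEnergy T m fun x => K x s)
      (∫ x in (0 : ℝ)..T, 2 * (iteratedDeriv m (fun y => K y t) x *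
        iteratedDeriv m (fun y => deriv (K y) t) x)) t := by
  have hm := contDiffOn_iteratedDeriv_fst hI hK m
  have hdiff : ∀ x, DifferentiableAt ℝ (fun s => iteratedDeriv m (fun y => K y s) x) t := fun x =>
    (hasDerivAt_snd ((contDiffAt_uncurry hm ht x).differentiableAt (by simp))).differentiableAt
  have hderiv := hasDerivAt_intervalIntegral
    (f := fun x s => iteratedDeriv m (fun y => K y s) x ^ 2)
    ((hm.pow 2).of_le (by exact_mod_cast le_top)) ht 0 T
  simp only [deriv_fun_pow (hdiff _), deriv_iteratedDeriv_comm hI hK ht, Nat.cast_ofNat,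
    Nat.add_one_sub_one, pow_one, mul_assoc] at hderiv
  exact hderiv

lemma le_mul_exp_of_hasDerivAt_le {E E' : ℝ → ℝ} {r κ C : ℝ} (hκ : 0 < κ)
    (hE : ContinuousOn E (Ici 0)) (hE' : ∀ t, 0 < t → HasDerivAt E (E' t) t)
    (hle : ∀ t, 0 < t → E' t ≤ (r - κ) * E t + C * exp (r * t)) {t : ℝ} (ht : 0 ≤ t) :
    E t ≤ max (E 0) (C / κ) * exp (r * t) := by
  set N := max (E 0) (C / κ)
  have hCN : C ≤ N * κ := (div_le_iff₀ hκ).1 (le_max_right _ _)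
  have hexp : ∀ s, exp (κ * s) = exp (r * s) * exp ((κ - r) * s) := fun s => by
    rw [← Real.exp_add]
    ring_nf
  have hlin : ∀ c s : ℝ, HasDerivAt (fun s => exp (c * s)) (exp (c * s) * c) s := fun c s => by
    simpa using ((hasDerivAt_id s).const_mul c).exp
  have hderiv : ∀ s, 0 < s → HasDerivAt (fun s => E s * exp ((κ - r) * s) - N * exp (κ * s))
      (E' s * exp ((κ - r) * s) + E s * (exp ((κ - r) * s) * (κ - r)) -
        N * (exp (κ * s) * κ)) s := fun s hs =>
    ((hE' s hs).mul (hlin _ s)).sub ((hlin κ s).const_mul N)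
  have hanti : AntitoneOn (fun s => E s * exp ((κ - r) * s) - N * exp (κ * s)) (Ici 0) := by
    refine antitoneOn_of_deriv_nonpos (convex_Ici 0)
      ((hE.mul (by fun_prop)).sub (by fun_prop)) ?_ ?_ <;> rw [interior_Ici]
    · exact fun s hs => (hderiv s hs).differentiableAt.differentiableWithinAt
    · intro s hs
      have hle' := mul_le_mul_of_nonneg_right (hle s hs) (exp_pos ((κ - r) * s)).le
      have hN := mul_le_mul_of_nonneg_right hCN (exp_pos (κ * s)).le
      rw [add_mul, mul_assoc C, ← hexp] at hle'
      rw [(hderiv s hs).deriv]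
      linarith
  have h0 := hanti self_mem_Ici (mem_Ici.2 ht) ht
  simp only [mul_zero, Real.exp_zero, mul_one, hexp t, ← mul_assoc, ← sub_mul] at h0
  have hneg : E t - N * exp (r * t) ≤ 0 :=
    nonpos_of_mul_nonpos_left (h0.trans (sub_nonpos.2 (le_max_left _ _))) (exp_pos _)
  linarith

lemma exists_isCompact_forall_mem_of_tendstoUniformly {X : Type*} [PseudoMetricSpace X]
    [ProperSpace X] {K : ℝ → ℝ → X} {U : Set X} {ℓ : X} {T : ℝ} (hT : 0 < T) (hU : IsOpen U)
    (hK : ContinuousOn (Function.uncurry K) (univ ×ˢ Ici 0))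
    (hper : ∀ t, Function.Periodic (fun x => K x t) T) (hKU : ∀ x t, 0 ≤ t → K x t ∈ U)
    (hℓ : ℓ ∈ U) (hlim : TendstoUniformly (fun t x => K x t) (fun _ => ℓ) atTop) :
    ∃ S, IsCompact S ∧ S ⊆ U ∧ ∀ x t, 0 ≤ t → K x t ∈ S := by
  obtain ⟨δ, hδ, hball⟩ := Metric.nhds_basis_closedBall.mem_iff.1 (hU.mem_nhds hℓ)
  obtain ⟨N, hN⟩ := eventually_atTop.1 (Metric.tendstoUniformly_iff.1 hlim δ hδ)
  have hbox : Icc 0 T ×ˢ Icc 0 N ⊆ univ ×ˢ Ici (0 : ℝ) :=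
    prod_mono (subset_univ _) Icc_subset_Ici_self
  refine ⟨Function.uncurry K '' (Icc 0 T ×ˢ Icc 0 N) ∪ Metric.closedBall ℓ δ,
    ((isCompact_Icc.prod isCompact_Icc).image_of_continuousOn (hK.mono hbox)).union
      (isCompact_closedBall ℓ δ), union_subset ?_ hball, fun x t ht => ?_⟩
  · rintro _ ⟨q, hq, rfl⟩
    exact hKU _ _ hq.2.1
  · rcases le_total t N with htN | hNt
    · obtain ⟨y, hy, hxy⟩ := (hper t).exists_mem_Ico₀ hT x
      exact Or.inl ⟨(y, t), ⟨Ico_subset_Icc_self hy, ht, htN⟩, hxy.symm⟩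
    · exact Or.inr (Metric.mem_closedBall'.2 (hN t hNt x).le)

variable {K : ℝ → ℝ → ℝ} {Φ g : ℝ → ℝ} {U S : Set ℝ} {T r C₀ : ℝ} {L : ℕ}

lemma exists_derivEnergy_le_of_quasilinear (hT : 0 < T) (hU : IsOpen U)
    (hΦ : ContDiffOn ℝ ∞ Φ U) (hg : ContDiffOn ℝ ∞ g U) (hS : IsCompact S) (hSU : S ⊆ U)
    (hΦS : ∀ y ∈ S, 0 < Φ y) (hK : ContDiffOn ℝ ∞ (Function.uncurry K) (univ ×ˢ Ici 0))
    (hper : ∀ t, Function.Periodic (fun x => K x t) T) (hKS : ∀ x t, 0 ≤ t → K x t ∈ S)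
    (hpde : ∀ x t, 0 < t → deriv (K x) t = quasilinearOp Φ g (fun y => K y t) x)
    (hr : r ≤ 0) (hL : 1 ≤ L)
    (hsup : ∀ l, 1 ≤ l → l ≤ L → ∀ t, 0 < t → ∀ x,
      |iteratedDeriv l (fun y => K y t) x| ≤ C₀ * exp (r * t))
    (hL2 : ∀ t, 0 < t → derivEnergy T (L + 1) (fun x => K x t) ≤ (C₀ * exp (r * t)) ^ 2) :
    ∃ N, ∀ t, 0 < t → derivEnergy T (L + 2) (fun x => K x t) ≤ N * exp (r * t) ^ 2 := by
  have hC₀ : 0 ≤ C₀ := nonneg_of_mul_nonneg_left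
    ((abs_nonneg _).trans (hsup 1 le_rfl hL 1 one_pos 0)) (exp_pos _)
  have hexp : ∀ t, exp (r * t) ^ 2 = exp (2 * r * t) := fun t => by
    rw [← Real.exp_nat_mul, Nat.cast_ofNat, mul_assoc]
  obtain ⟨φ, hφ, hφS⟩ := hS.exists_forall_le' (hΦ.continuousOn.mono hSU) hΦS
  obtain ⟨C, henergy⟩ := exists_integral_two_mul_iteratedDeriv_mul_quasilinearOp_le hT hU hΦ hg
    hS hSU hφ hφS hL C₀ (1 - 2 * r)
  refine ⟨_, fun t ht => (le_mul_exp_of_hasDerivAt_le one_pos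
    (continuousOn_derivEnergy (uniqueDiffOn_Ici 0) hK T (L + 2))
    (fun s hs => hasDerivAt_derivEnergy (uniqueDiffOn_Ici 0) hK (Ici_mem_nhds hs) T (L + 2))
    (r := 2 * r) (C := C * C₀ ^ 2) (fun s hs => ?_) ht.le).trans_eq (by rw [hexp])⟩
  have hdecay : C₀ * exp (r * s) ≤ C₀ := mul_le_of_le_one_right hC₀
    (Real.exp_le_one_iff.2 (mul_nonpos_of_nonpos_of_nonneg hr hs.le))
  have hs_energy := henergy (fun x => K x s) (contDiff_slice hK hs.le) (hper s)
    (fun x => hKS x s hs.le) (C₀ * exp (r * s)) (by positivity) hdecay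
    (fun i hi hiL x => hsup i hi hiL s hs x) (hL2 s hs)
  rw [mul_pow, hexp, ← funext fun x => hpde x s hs] at hs_energy
  linarith

theorem inductive_step_derivative_decay_general {ℓ : ℝ} (hT : 0 < T) (hU : IsOpen U)
    (hΦ : ContDiffOn ℝ ∞ Φ U) (hg : ContDiffOn ℝ ∞ g U) (hΦU : ∀ y ∈ U, 0 < Φ y)
    (hK : ContDiffOn ℝ ∞ (Function.uncurry K) (univ ×ˢ Ici 0))
    (hper : ∀ t, Function.Periodic (fun x => K x t) T) (hKU : ∀ x t, 0 ≤ t → K x t ∈ U)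
    (hpde : ∀ x t, 0 < t → deriv (K x) t = quasilinearOp Φ g (fun y => K y t) x)
    (hℓ : ℓ ∈ U) (hlim : TendstoUniformly (fun t x => K x t) (fun _ => ℓ) atTop)
    (hr : r ≤ 0) (hL : 1 ≤ L)
    (hsup : ∀ l, 1 ≤ l → l ≤ L → ∀ t, 0 < t → ∀ x,
      |iteratedDeriv l (fun y => K y t) x| ≤ C₀ * exp (r * t))
    (hL2 : ∀ t, 0 < t →
      derivEnergy T (L + 1) (fun x => K x t) ^ ((1 : ℝ) / 2) ≤ C₀ * exp (r * t)) :
    ∃ C, 0 < C ∧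
      (∀ t, 0 < t → derivEnergy T (L + 2) (fun x => K x t) ^ ((1 : ℝ) / 2) ≤ C * exp (r * t)) ∧
      ∀ t, 0 < t → ∀ x, |iteratedDeriv (L + 1) (fun y => K y t) x| ≤ C * exp (r * t) := by
  simp only [← Real.sqrt_eq_rpow] at hL2 ⊢
  obtain ⟨S, hS, hSU, hKS⟩ := exists_isCompact_forall_mem_of_tendstoUniformly hT hU
    hK.continuousOn hper hKU hℓ hlim
  obtain ⟨N, hN⟩ := exists_derivEnergy_le_of_quasilinear hT hU hΦ hg hS hSU
    (fun y hy => hΦU y (hSU hy)) hK hper hKS hpde hr hL hsup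
    (fun t ht => (Real.sqrt_le_left ((Real.sqrt_nonneg _).trans (hL2 t ht))).1 (hL2 t ht))
  have hsqrt : ∀ A t, √(A * exp (r * t) ^ 2) = √A * exp (r * t) := fun A t => by
    rw [Real.sqrt_mul' _ (sq_nonneg _), Real.sqrt_sq (exp_pos _).le]
  refine ⟨√N + √(T * N) + 1, by positivity, fun t ht => ?_, fun t ht x => ?_⟩
  · calc √(derivEnergy T (L + 2) fun x => K x t) ≤ √(N * exp (r * t) ^ 2) :=
          Real.sqrt_le_sqrt (hN t ht)
      _ = √N * exp (r * t) := hsqrt N t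
      _ ≤ (√N + √(T * N) + 1) * exp (r * t) := by
        gcongr
        linarith [Real.sqrt_nonneg (T * N)]
  · calc |iteratedDeriv (L + 1) (fun y => K y t) x| ≤ √(T * N * exp (r * t) ^ 2) := by
          rw [mul_assoc]
          exact Real.abs_le_sqrt ((sq_iteratedDeriv_le_mul_derivEnergy hT
            (contDiff_slice hK ht.le) (hper t) L x).trans (by gcongr; exact hN t ht))
      _ = √(T * N) * exp (r * t) := hsqrt (T * N) t
      _ ≤ (√N + √(T * N) + 1) * exp (r * t) := by
        gcongr
        linarith [Real.sqrt_nonneg N]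

end Evolution

/-- The inductive step in the proof of Proposition 2.1: decay of the sup
norms of the first `L` derivatives and of the `L²` norm of the `(L+1)`-st
derivative implies decay of the `L²` norm of the `(L+2)`-nd derivative and of
the sup norm of the `(L+1)`-st derivative. -/
theorem inductive_step_derivative_decay
    (p : ℝ) (hp : 1 ≤ p) (K : ℝ → ℝ → ℝ)
    (hsmooth : ContDiffOn ℝ (⊤ : ℕ∞) (fun q : ℝ × ℝ => K q.1 q.2) (univ ×ˢ Ici 0))
    (hper : ∀ τ : ℝ, Function.Periodic (fun θ => K θ τ) (2 * π))
    (hpos : ∀ θ τ : ℝ, 0 ≤ τ → 0 < K θ τ)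
    (hpde : ∀ θ : ℝ, ∀ τ ∈ Ioi (0:ℝ),
      deriv (fun s => K θ s) τ =
        p * K θ τ ^ (1 + 1 / p) * deriv (deriv (fun x => K x τ)) θ
          + p * K θ τ ^ (2 + 1 / p) - p * K θ τ)
    (hconv : TendstoUniformly (fun τ θ => K θ τ) (fun _ => 1) atTop)
    (α : ℝ) (hα0 : 0 < α) (hα1 : α < 1)
    (L : ℕ) (hL : 1 ≤ L) (CL : ℝ) (hCL : 0 < CL)
    (hsup : ∀ l : ℕ, 1 ≤ l → l ≤ L → ∀ τ : ℝ, 0 < τ → ∀ θ : ℝ,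
      |iteratedDeriv l (fun x => K x τ) θ| ≤ CL * Real.exp (-2 * α * p * τ))
    (hL2 : ∀ τ : ℝ, 0 < τ →
      (∫ θ in (0:ℝ)..(2 * π), (iteratedDeriv (L + 1) (fun x => K x τ) θ) ^ 2) ^ ((1:ℝ) / 2)
        ≤ CL * Real.exp (-2 * α * p * τ)) :
    ∃ C : ℝ, 0 < C ∧
      (∀ τ : ℝ, 0 < τ →
        (∫ θ in (0:ℝ)..(2 * π), (iteratedDeriv (L + 2) (fun x => K x τ) θ) ^ 2) ^ ((1:ℝ) / 2)
          ≤ C * Real.exp (-2 * α * p * τ)) ∧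
      (∀ τ : ℝ, 0 < τ → ∀ θ : ℝ,
        |iteratedDeriv (L + 1) (fun x => K x τ) θ| ≤ C * Real.exp (-2 * α * p * τ)) := by
  have hp0 : 0 < p := zero_lt_one.trans_le hp
  have hpow : ∀ s : ℝ, ContDiffOn ℝ ∞ (fun y : ℝ => p * y ^ s) (Ioi 0) := fun s y hy =>
    (contDiffAt_const.mul (Real.contDiffAt_rpow_const_of_ne hy.ne')).contDiffWithinAt
  exact inductive_step_derivative_decay_general (U := Ioi 0) (Φ := fun y => p * y ^ (1 + 1 / p))
    (g := fun y => p * y ^ (2 + 1 / p) - p * y) Real.two_pi_pos isOpen_Ioi (hpow _)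
    ((hpow _).sub (contDiffOn_const.mul contDiffOn_id))
    (fun y hy => mul_pos hp0 (Real.rpow_pos_of_pos hy _)) hsmooth hper hpos
    (fun θ τ hτ => by
      simpa only [quasilinearOp, iteratedDeriv_succ, iteratedDeriv_zero, add_sub_assoc]
        using hpde θ τ hτ)
    (mem_Ioi.2 one_pos) hconv (by nlinarith [mul_pos hα0 hp0]) hL hsup hL2
end
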